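/- arXiv:1907.05658 — 3 statements merged into one kernel-verified Lean document; each statement's English description precedes it below -/
import Mathlib

section
/- Let N ∈ ℕ and C > 0, and for each j ∈ ℕ let a_j(y) = Σ_{m=0}^N a_{j,m}·e^{−2πi m y} be a trigonometric polynomial of degree at most N with a_j(0) = 1 and sup_{y∈ℝ}|a_j(y)| ≤ C. Let φ : ℝ → ℂ be continuous, integrable and compactly supported with linearly independent integer shifts and with φ̂(z) = Π_{j=1}^∞ a_j(2^{−j} z) for all z ∈ ℂ (pointwise limit of partial products). Let λ ∈ ℂ, d ∈ ℕ₀ with d ≤ N, let ω_0, …, ω_d : ℝ → ℂ be 1-periodic analytic functions with ω_d not identically zero, and let p_0, …, p_d be polynomials with deg(p_k) = k. If the analytic function g(t) = e^{λt} Σ_{k=0}^d p_k(t)·ω_k(t) belongs to V_φ, then the sequences { φ̂^{(k)}(−iλ/(2π) + ℓ) : ℓ ∈ ℤ }, k = 0, …, d, contain all together at most N nonzero elements. -/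
open MeasureTheory

/-- The Fourier transform of `φ`, analytically extended to `ℂ`:
`φ̂(z) = ∫_ℝ φ(x)·e^{−2πi x z} dx`. -/
noncomputable def fourierExt (φ : ℝ → ℂ) (z : ℂ) : ℂ :=
  ∫ x : ℝ, φ x * Complex.exp (-(2 * (Real.pi : ℂ) * Complex.I * (x : ℂ) * z))


/-- The exponential with frequency `s`. -/
noncomputable def eF (s : ℝ) : ℝ → ℂ := fun y =>
  Complex.exp (-(2 * (Real.pi : ℂ) * Complex.I * (s : ℂ) * (y : ℂ)))

/-- Trigonometric sums with frequencies in `S`. -/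
noncomputable def TS (S : Set ℝ) : Submodule ℂ (ℝ → ℂ) := Submodule.span ℂ (eF '' S)

lemma eF_add (s t : ℝ) : eF (s + t) = eF s * eF t := by
  funext y
  simp only [eF, Pi.mul_apply, ← Complex.exp_add]
  congr 1; push_cast; ring

lemma eF_zero : eF 0 = 1 := by
  funext y
  simp [eF]

lemma eF_mem {S : Set ℝ} {s : ℝ} (h : s ∈ S) : eF s ∈ TS S :=
  Submodule.subset_span ⟨s, h, rfl⟩

lemma norm_eF (s y : ℝ) : ‖eF s y‖ = 1 := by
  have : eF s y = Complex.exp (((-(2 * Real.pi * s * y) : ℝ) : ℂ) * Complex.I) := by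
    simp only [eF]; congr 1; push_cast; ring
  rw [this, Complex.norm_exp_ofReal_mul_I]

lemma continuous_eF (s : ℝ) : Continuous (eF s) := by
  unfold eF; fun_prop

lemma TS_mul {S S' S'' : Set ℝ} (h : ∀ s ∈ S, ∀ s' ∈ S', s + s' ∈ S'') {u v : ℝ → ℂ}
    (hu : u ∈ TS S) (hv : v ∈ TS S') : u * v ∈ TS S'' := by
  have := Submodule.mul_mem_mul hu hv
  rw [TS, TS, Submodule.span_mul_span] at this
  refine Submodule.span_mono ?_ this
  rintro _ ⟨_, ⟨s, hs, rfl⟩, _, ⟨s', hs', rfl⟩, rfl⟩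
  exact ⟨s + s', h s hs s' hs', eF_add s s'⟩

lemma TS_continuous {S : Set ℝ} {u : ℝ → ℂ} (hu : u ∈ TS S) : Continuous u := by
  induction hu using Submodule.span_induction with
  | mem x h => obtain ⟨s, -, rfl⟩ := h; exact continuous_eF s
  | zero => exact continuous_const
  | add x y _ _ hx hy => exact hx.add hy
  | smul a x _ hx => exact hx.const_smul a

open FourierTransform in
lemma fourier_eq_eF (f : ℝ → ℂ) (y : ℝ) : 𝓕 f y = ∫ x, eF y x * f x := by
  rw [Real.fourier_real_eq_integral_exp_smul]
  congr 1; funext x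
  rw [smul_eq_mul, eF]
  congr 2; push_cast; ring

open FourierTransform in
lemma TS_integral_zero {S : Set ℝ} {u : ℝ → ℂ} (hu : u ∈ TS S) (w : SchwartzMap ℝ ℂ)
    (hw : ∀ s ∈ S, 𝓕 (w : ℝ → ℂ) s = 0) :
    Integrable (fun y => u y * w y) ∧ ∫ y, u y * w y = 0 := by
  induction hu using Submodule.span_induction with
  | mem x h =>
    obtain ⟨s, hs, rfl⟩ := h
    refine ⟨w.integrable.bdd_mul (c := 1) (continuous_eF s).aestronglyMeasurable
      (Filter.Eventually.of_forall fun y => (norm_eF s y).le), ?_⟩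
    rw [← fourier_eq_eF, hw s hs]
  | zero => simp
  | add x y _ _ hx hy =>
    simp only [Pi.add_apply, add_mul]
    exact ⟨hx.1.add hy.1, by rw [integral_add hx.1 hy.1, hx.2, hy.2, add_zero]⟩
  | smul a x _ hx =>
    simp only [Pi.smul_apply, smul_mul_assoc]
    exact ⟨hx.1.smul a, by rw [integral_smul, hx.2, smul_zero]⟩

open FourierTransform in
lemma weak_support {h : ℝ → ℂ} (hc : Continuous h) (hi : Integrable h) {U S : Set ℝ}
    (hU : IsOpen U) (hSU : ∀ s ∈ S, s ∉ U) (τ : ℕ → ℝ → ℂ) (J0 : ℕ)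
    (hτ : ∀ J ≥ J0, τ J ∈ TS S)
    (hlim : ∀ y, Filter.Tendsto (fun J => τ J y) Filter.atTop (nhds (∫ x, eF y x * h x)))
    (K : ℝ) (p : ℕ) (hb : ∀ J y, ‖τ J y‖ ≤ K * (1 + ‖y‖ ^ p)) :
    ∀ x ∈ U, h x = 0 := by
  have hae : ∀ᵐ x, x ∈ U → h x = 0 := by
    refine hU.ae_eq_zero_of_integral_contDiff_smul_eq_zero
      (hi.locallyIntegrable.locallyIntegrableOn U) fun g hg hgs hgU => ?_
    have hgs' : HasCompactSupport (fun x => (g x : ℂ)) := hgs.comp_left Complex.ofReal_zero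
    have hg' : ContDiff ℝ (↑(⊤ : ℕ∞)) (fun x => (g x : ℂ)) :=
      Complex.ofRealCLM.contDiff.comp hg
    let G : SchwartzMap ℝ ℂ := hgs'.toSchwartzMap hg'
    let w : SchwartzMap ℝ ℂ := 𝓕⁻ G
    have hw : 𝓕 w = G := FourierTransform.fourier_fourierInv_eq G
    have hw' : ∀ s, 𝓕 (w : ℝ → ℂ) s = (g s : ℂ) := by
      intro s
      rw [← SchwartzMap.fourier_coe, hw]; rfl
    have hzero : ∀ J ≥ J0, ∫ y, τ J y * w y = 0 := fun J hJ =>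
      (TS_integral_zero (hτ J hJ) w (fun s hs => by
        rw [hw' s]
        have : g s = 0 := by
          by_contra hne
          exact hSU s hs (hgU (subset_tsupport _ hne))
        simp [this])).2
    have hmeas : ∀ J ≥ J0, AEStronglyMeasurable (fun y => τ J y * w y) volume := fun J hJ =>
      ((TS_continuous (hτ J hJ)).mul w.continuous).aestronglyMeasurable
    have hlim2 : Filter.Tendsto (fun J => ∫ y, τ J y * w y) Filter.atTop
        (nhds (∫ y, 𝓕 h y * w y)) := by
      refine tendsto_integral_filter_of_dominated_convergence
        (fun y => K * (‖w y‖ + ‖y‖ ^ p * ‖w y‖)) ?_ ?_ ?_ ?_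
      · exact Filter.eventually_atTop.2 ⟨J0, hmeas⟩
      · refine Filter.Eventually.of_forall fun J => Filter.Eventually.of_forall fun y => ?_
        rw [norm_mul]
        calc _ ≤ K * (1 + ‖y‖ ^ p) * ‖w y‖ := by gcongr; exact hb J y
          _ = _ := by ring
      · exact (w.integrable.norm.add (w.integrable_pow_mul volume p)).const_mul K
      · refine Filter.Eventually.of_forall fun y => ?_
        rw [fourier_eq_eF]
        exact (hlim y).mul_const _
    have h0 : ∫ y, 𝓕 h y * w y = 0 := by
      refine tendsto_nhds_unique hlim2 ?_
      refine Filter.Tendsto.congr' ?_ tendsto_const_nhds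
      exact Filter.eventually_atTop.2 ⟨J0, fun J hJ => (hzero J hJ).symm⟩
    have hflip : ∫ y, 𝓕 h y * w y = ∫ x, h x * 𝓕 (w : ℝ → ℂ) x := by
      simpa using! VectorFourier.integral_bilin_fourierIntegral_eq_flip
        (ContinuousLinearMap.mul ℂ ℂ) (L := innerₗ ℝ)
        Real.continuous_fourierChar continuous_inner hi w.integrable
    rw [h0] at hflip
    rw [hflip]
    congr 1; funext x
    rw [hw' x, Complex.real_smul, mul_comm]
  -- upgrade
  intro x hx
  by_contra hne
  have hop : IsOpen (U ∩ {x | h x ≠ 0}) := hU.inter (isOpen_ne_fun hc continuous_const)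
  have hnull : volume (U ∩ {x | h x ≠ 0}) = 0 := by
    rw [ae_iff] at hae
    convert hae using 2
    ext x; simp
  exact (hop.measure_pos volume ⟨x, hx, hne⟩).ne' hnull

lemma int_exp_zero (n : ℤ) (hn : n ≠ 0) :
    ∫ y in (0 : ℝ)..1, Complex.exp (2 * (Real.pi : ℂ) * Complex.I * (n : ℂ) * (y : ℂ)) = 0 := by
  have hne : (2 * (Real.pi : ℂ) * Complex.I * (n : ℂ)) ≠ 0 := by
    have h2 : (2 * (Real.pi : ℂ) * Complex.I) ≠ 0 := Complex.two_pi_I_ne_zero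
    exact mul_ne_zero h2 (by exact_mod_cast hn)
  rw [integral_exp_mul_complex hne]
  have : Complex.exp (2 * (Real.pi : ℂ) * Complex.I * (n : ℂ) * ((1 : ℝ) : ℂ)) = 1 := by
    rw [Complex.exp_eq_one_iff]; exact ⟨n, by push_cast; ring⟩
  rw [this]; simp

lemma coef_bd {N : ℕ} {C : ℝ} (c : ℕ → ℂ)
    (h : ∀ y : ℝ, ‖∑ m ∈ Finset.range (N + 1),
      c m * Complex.exp (-(2 * (Real.pi : ℂ) * Complex.I * (m : ℂ) * (y : ℂ)))‖ ≤ C)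
    (m : ℕ) (hm : m ∈ Finset.range (N + 1)) : ‖c m‖ ≤ C := by
  have key : ∫ y in (0 : ℝ)..1, (∑ k ∈ Finset.range (N + 1),
      c k * Complex.exp (-(2 * (Real.pi : ℂ) * Complex.I * (k : ℂ) * (y : ℂ)))) *
        Complex.exp (2 * (Real.pi : ℂ) * Complex.I * (m : ℂ) * (y : ℂ)) = c m := by
    have h1 : ∀ y : ℝ, (∑ k ∈ Finset.range (N + 1),
      c k * Complex.exp (-(2 * (Real.pi : ℂ) * Complex.I * (k : ℂ) * (y : ℂ)))) *
        Complex.exp (2 * (Real.pi : ℂ) * Complex.I * (m : ℂ) * (y : ℂ)) =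
        ∑ k ∈ Finset.range (N + 1), c k *
          Complex.exp (2 * (Real.pi : ℂ) * Complex.I * (((m : ℤ) - k : ℤ) : ℂ) * (y : ℂ)) := by
      intro y
      rw [Finset.sum_mul]
      refine Finset.sum_congr rfl fun k _ => ?_
      rw [mul_assoc, ← Complex.exp_add]
      congr 2; push_cast; ring
    simp_rw [h1]
    rw [intervalIntegral.integral_finsetSum]
    · rw [Finset.sum_eq_single m]
      · simp
      · intro k _ hk
        rw [intervalIntegral.integral_const_mul, int_exp_zero _ (by omega), mul_zero]
      · intro h; exact absurd hm h
    · intro k _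
      apply Continuous.intervalIntegrable
      fun_prop
  rw [← key]
  refine (intervalIntegral.norm_integral_le_of_norm_le_const (C := C) ?_).trans (by simp)
  intro y _
  rw [norm_mul]
  have : ‖Complex.exp (2 * (Real.pi : ℂ) * Complex.I * (m : ℂ) * (y : ℂ))‖ = 1 := by
    have : (2 * (Real.pi : ℂ) * Complex.I * (m : ℂ) * (y : ℂ)) =
      ((2 * Real.pi * m * y : ℝ) : ℂ) * Complex.I := by push_cast; ring
    rw [this, Complex.norm_exp_ofReal_mul_I]
  rw [this, mul_one]
  exact h y

lemma trig_lip {N : ℕ} {C : ℝ} (c : ℕ → ℂ)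
    (h : ∀ y : ℝ, ‖∑ m ∈ Finset.range (N + 1),
      c m * Complex.exp (-(2 * (Real.pi : ℂ) * Complex.I * (m : ℂ) * (y : ℂ)))‖ ≤ C)
    (h0 : ∑ m ∈ Finset.range (N + 1), c m = 1) (y : ℝ) :
    ‖∑ m ∈ Finset.range (N + 1),
      c m * Complex.exp (-(2 * (Real.pi : ℂ) * Complex.I * (m : ℂ) * (y : ℂ)))‖ ≤
      1 + ((N + 1) * (C * (2 * Real.pi * N))) * |y| := by
  have hC : 0 ≤ C := (norm_nonneg _).trans (h 0)
  have e1 : ∑ m ∈ Finset.range (N + 1),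
      c m * Complex.exp (-(2 * (Real.pi : ℂ) * Complex.I * (m : ℂ) * (y : ℂ))) =
      1 + ∑ m ∈ Finset.range (N + 1),
      c m * (Complex.exp (-(2 * (Real.pi : ℂ) * Complex.I * (m : ℂ) * (y : ℂ))) - 1) := by
    simp_rw [mul_sub, Finset.sum_sub_distrib, mul_one, h0]; ring
  rw [e1]
  refine (norm_add_le _ _).trans ?_
  rw [norm_one]
  gcongr
  refine (norm_sum_le _ _).trans ?_
  have : ∀ m ∈ Finset.range (N + 1), ‖c m * (Complex.exp (-(2 * (Real.pi : ℂ) * Complex.I * (m : ℂ) * (y : ℂ))) - 1)‖ ≤ C * (2 * Real.pi * N) * |y| := by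
    intro m hm
    rw [norm_mul, mul_assoc C]
    gcongr
    · exact coef_bd c h m hm
    · have : (-(2 * (Real.pi : ℂ) * Complex.I * (m : ℂ) * (y : ℂ))) =
        Complex.I * ((-(2 * Real.pi * m * y) : ℝ) : ℂ) := by push_cast; ring
      rw [this]
      refine (Real.norm_exp_I_mul_ofReal_sub_one_le).trans ?_
      have hmN : (m : ℝ) ≤ N := by
        have := Finset.mem_range.1 hm
        exact_mod_cast (by omega : m ≤ N)
      rw [norm_neg, Real.norm_eq_abs, abs_mul, abs_of_nonneg (by positivity : 0 ≤ 2 * Real.pi * (m : ℝ))]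
      gcongr
  refine (Finset.sum_le_sum this).trans ?_
  simp only [Finset.sum_const, Finset.card_range, nsmul_eq_mul]
  push_cast
  apply le_of_eq; ring

lemma prod_bd (C L : ℝ) (hC : 1 ≤ C) (hL : 0 ≤ L) : ∃ (K : ℝ) (p : ℕ), ∀ (x : ℕ → ℝ) (r : ℝ),
    0 ≤ r → (∀ i, 0 ≤ x i) → (∀ i, x i ≤ C) → (∀ i, x i ≤ 1 + L * ((2 : ℝ)⁻¹ ^ i * r)) →
    ∀ J, ∏ i ∈ Finset.Icc 1 J, x i ≤ K * (1 + r ^ p) := by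
  obtain ⟨p, hp⟩ := pow_unbounded_of_one_lt C (one_lt_two)
  refine ⟨2 ^ p * 2 ^ (p - 1) * Real.exp L, p, fun x r hr h0 hxC hxL J => ?_⟩
  obtain ⟨n, hn1, hn2⟩ := exists_nat_pow_near (x := 1 + r) (y := (2 : ℝ)) (by linarith) one_lt_two
  have hsmall : ∀ J, ∏ i ∈ Finset.Icc 1 J, x i ≤ C ^ J := by
    intro J
    refine (Finset.prod_le_prod (fun i _ => h0 i) (fun i _ => hxC i)).trans ?_
    simp
  have hbig : ∀ k, ∏ i ∈ Finset.Icc 1 (n + 1 + k), x i ≤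
      C ^ (n + 1) * Real.exp (L * (1 - (2 : ℝ)⁻¹ ^ k)) := by
    intro k
    induction k with
    | zero => simpa using hsmall (n + 1)
    | succ k ih =>
      rw [← add_assoc, Finset.prod_Icc_succ_top (by omega)]
      have hx : x (n + 1 + k + 1) ≤ Real.exp (L * (2 : ℝ)⁻¹ ^ (k + 1)) := by
        refine (hxL _).trans ?_
        refine le_trans ?_ (Real.add_one_le_exp _)
        rw [add_comm]
        gcongr
        have : (2 : ℝ)⁻¹ ^ (n + 1 + k + 1) * r = (2 : ℝ)⁻¹ ^ (k + 1) * ((2 : ℝ)⁻¹ ^ (n + 1) * r) := by ring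
        rw [this]
        refine mul_le_of_le_one_right (by positivity) ?_
        rw [inv_pow, inv_mul_le_one₀ (by positivity)]
        linarith
      calc _ ≤ (C ^ (n + 1) * Real.exp (L * (1 - (2 : ℝ)⁻¹ ^ k))) * Real.exp (L * (2 : ℝ)⁻¹ ^ (k + 1)) := by
            gcongr
            exact h0 _
        _ = _ := by
            rw [mul_assoc, ← Real.exp_add]; congr 2; ring
  have hall : ∏ i ∈ Finset.Icc 1 J, x i ≤ C ^ (n + 1) * Real.exp L := by
    rcases le_total J (n + 1) with h | h
    · refine (hsmall J).trans ?_
      refine (pow_le_pow_right₀ hC h).trans ?_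
      exact le_mul_of_one_le_right (by positivity) (Real.one_le_exp hL)
    · obtain ⟨k, rfl⟩ := Nat.exists_eq_add_of_le h
      refine (hbig k).trans ?_
      gcongr
      have : (0 : ℝ) ≤ (2 : ℝ)⁻¹ ^ k := by positivity
      nlinarith
  refine hall.trans ?_
  have h1 : C ^ (n + 1) ≤ 2 ^ p * (1 + r) ^ p := by
    calc C ^ (n + 1) ≤ (2 ^ p) ^ (n + 1) := by gcongr
      _ = (2 * 2 ^ n) ^ p := by rw [← pow_mul, ← pow_succ', ← pow_mul, mul_comm]
      _ ≤ (2 * (1 + r)) ^ p := by gcongr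
      _ = _ := by rw [mul_pow]
  have h2 : (1 + r) ^ p ≤ 2 ^ (p - 1) * (1 + r ^ p) := by
    have := add_pow_le (zero_le_one) hr p
    simpa using this
  calc C ^ (n + 1) * Real.exp L ≤ (2 ^ p * (2 ^ (p - 1) * (1 + r ^ p))) * Real.exp L := by
        gcongr
        exact h1.trans (by gcongr)
    _ = _ := by ring

/-- The dyadic grid of level `j`. -/
def dyGrid (j : ℕ) : Set ℝ := {x | ∃ n : ℤ, x = n * (2 : ℝ)⁻¹ ^ j}

/-- The frequencies of the `i`-th mask. -/
def maskSet (N i : ℕ) : Set ℝ := {x | ∃ m : ℕ, m ≤ N ∧ x = m * (2 : ℝ)⁻¹ ^ i}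

lemma dyGrid_succ {j N : ℕ} : ∀ s ∈ dyGrid j, ∀ s' ∈ maskSet N (j + 1), s + s' ∈ dyGrid (j + 1) := by
  rintro _ ⟨n, rfl⟩ _ ⟨m, -, rfl⟩
  refine ⟨2 * n + m, ?_⟩
  push_cast
  rw [pow_succ]; ring

lemma dyGrid_add {j : ℕ} : ∀ s ∈ dyGrid j, ∀ s' ∈ dyGrid j, s + s' ∈ dyGrid j := by
  rintro _ ⟨n, rfl⟩ _ ⟨m, rfl⟩
  exact ⟨n + m, by push_cast; ring⟩

lemma int_mem_dyGrid (j : ℕ) (l : ℤ) : (l : ℝ) ∈ dyGrid j := by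
  refine ⟨l * 2 ^ j, ?_⟩
  push_cast
  rw [mul_assoc, ← mul_pow]; norm_num

lemma low_prod {N : ℕ} {mk : ℕ → ℝ → ℂ} (hmk : ∀ i, mk i ∈ TS (maskSet N i)) (j : ℕ) :
    ∏ i ∈ Finset.Icc 1 j, mk i ∈ TS (dyGrid j) := by
  induction j with
  | zero =>
    simp only [zero_lt_one, Finset.Icc_eq_empty_of_lt, Finset.prod_empty]
    rw [← eF_zero]
    exact eF_mem ⟨0, by simp⟩
  | succ j ih =>
    rw [Finset.prod_Icc_succ_top (by omega)]
    exact TS_mul dyGrid_succ ih (hmk _)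

lemma high_prod {N : ℕ} {mk : ℕ → ℝ → ℂ} (hmk : ∀ i, mk i ∈ TS (maskSet N i)) (j k : ℕ) :
    ∃ v ∈ TS (Set.Icc 0 (N * ((2 : ℝ)⁻¹ ^ j - (2 : ℝ)⁻¹ ^ (j + k)))),
      ∏ i ∈ Finset.Icc 1 (j + k), mk i = (∏ i ∈ Finset.Icc 1 j, mk i) * v := by
  induction k with
  | zero => exact ⟨1, by rw [← eF_zero]; exact eF_mem (by simp), by simp⟩
  | succ k ih =>
    obtain ⟨v, hv, hv'⟩ := ih
    refine ⟨v * mk (j + k + 1), TS_mul ?_ hv (hmk _), ?_⟩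
    · rintro s ⟨hs1, hs2⟩ _ ⟨m, hm, rfl⟩
      refine ⟨by positivity, ?_⟩
      have hm' : (m : ℝ) ≤ N := by exact_mod_cast hm
      have : (m : ℝ) * (2 : ℝ)⁻¹ ^ (j + k + 1) ≤ N * (2 : ℝ)⁻¹ ^ (j + k + 1) := by gcongr
      have e : (2 : ℝ)⁻¹ ^ (j + k) = 2 * (2 : ℝ)⁻¹ ^ (j + k + 1) := by rw [pow_succ]; ring
      rw [← add_assoc]
      rw [e] at hs2
      nlinarith
    · rw [← add_assoc, Finset.prod_Icc_succ_top (by omega), hv', mul_assoc]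

lemma integral_eF_shift (φ : ℝ → ℂ) (s y : ℝ) :
    ∫ x, eF y x * φ (x - s) = eF s y * ∫ x, eF y x * φ x := by
  have h : ∀ x, eF y x * φ (x - s) = (fun x => eF s y * (eF y x * φ x)) (x - s) := by
    intro x
    simp only
    rw [← mul_assoc]
    congr 1
    simp only [eF, ← Complex.exp_add]
    congr 1; push_cast; ring
  simp_rw [h]
  rw [integral_sub_right_eq_self (fun x => eF s y * (eF y x * φ x)) s, integral_const_mul]

lemma dep_main {N : ℕ} {mk : ℕ → ℝ → ℂ} (hmk : ∀ i, mk i ∈ TS (maskSet N i))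
    {K : ℝ} {p : ℕ} (hbd : ∀ J y, ‖(∏ i ∈ Finset.Icc 1 J, mk i) y‖ ≤ K * (1 + ‖y‖ ^ p))
    {φ : ℝ → ℂ} (hcont : Continuous φ) (hint : Integrable φ) (hsupp : HasCompactSupport φ)
    (hlim : ∀ y, Filter.Tendsto (fun J => (∏ i ∈ Finset.Icc 1 J, mk i) y) Filter.atTop
      (nhds (∫ x, eF y x * φ x)))
    {g : ℝ → ℂ} (hgan : AnalyticOnNhd ℝ g Set.univ) {a : ℤ → ℂ}
    (hg : ∀ t, g t = ∑' l : ℤ, a l * φ (t - l))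
    (j : ℕ) (s : Fin (N + 1) → ℝ) (hs : ∀ i, s i ∈ dyGrid j) :
    ∃ c : Fin (N + 1) → ℂ, (∃ i, c i ≠ 0) ∧ ∀ t, ∑ i, c i * g (t - s i) = 0 := by
  obtain ⟨R, hR⟩ : ∃ R : ℝ, ∀ x, φ x ≠ 0 → |x| ≤ R := by
    obtain ⟨R, hR⟩ := hsupp.isCompact.isBounded.exists_norm_le
    exact ⟨R, fun x hx => hR x (subset_tsupport _ hx)⟩
  obtain ⟨M, hM⟩ := exists_nat_ge (R + 1 + ∑ i, |s i|)
  set Ls : Finset ℤ := Finset.Icc (-(M : ℤ)) M with hLs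
  set Q : ℝ → ℂ := ∑ l ∈ Ls, a l • eF (l : ℝ) with hQ
  have hQm : Q ∈ TS (dyGrid j) := Submodule.sum_mem _ fun l _ =>
    Submodule.smul_mem _ _ (eF_mem (int_mem_dyGrid j l))
  set low : ℝ → ℂ := ∏ i ∈ Finset.Icc 1 j, mk i with hlow
  have hlowm : low ∈ TS (dyGrid j) := low_prod hmk j
  let win : Set ℝ := (fun n : ℤ => (n : ℝ) * (2 : ℝ)⁻¹ ^ j) '' (Finset.Ioc (-(N : ℤ)) 0 : Finset ℤ)
  let out : Set ℝ := {x | ∃ n : ℤ, (n ≤ -(N : ℤ) ∨ 1 ≤ n) ∧ x = n * (2 : ℝ)⁻¹ ^ j}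
  have hgrid : dyGrid j ⊆ win ∪ out := by
    rintro _ ⟨n, rfl⟩
    by_cases h : n ∈ Finset.Ioc (-(N : ℤ)) 0
    · exact Or.inl ⟨n, h, rfl⟩
    · refine Or.inr ⟨n, ?_, rfl⟩
      simp only [Finset.mem_Ioc] at h
      omega
  have hB : ∀ i, ∃ w ∈ TS win, ∃ r ∈ TS out, w + r = eF (s i) * Q * low := by
    intro i
    have h1 : eF (s i) * Q * low ∈ TS (dyGrid j) :=
      TS_mul dyGrid_add (TS_mul dyGrid_add (eF_mem (hs i)) hQm) hlowm
    have h2 : TS (dyGrid j) ≤ TS win ⊔ TS out := by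
      rw [TS, TS, TS, ← Submodule.span_union, ← Set.image_union]
      exact Submodule.span_mono (Set.image_mono hgrid)
    exact Submodule.mem_sup.1 (h2 h1)
  choose w hw r hr hwr using hB
  have hfin : ¬ LinearIndependent ℂ w := by
    intro hli
    classical
    let Fs : Finset (ℝ → ℂ) := (Finset.Ioc (-(N : ℤ)) 0).image (fun n : ℤ => eF ((n : ℝ) * (2 : ℝ)⁻¹ ^ j))
    have hTS : TS win = Submodule.span ℂ (Fs : Set (ℝ → ℂ)) := by
      rw [TS]; congr 1
      simp only [win, Fs, Finset.coe_image, Set.image_image]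
    have hli' : LinearIndependent ℂ (fun i => (⟨w i, hTS ▸ hw i⟩ : Submodule.span ℂ (Fs : Set (ℝ → ℂ)))) := by
      apply LinearIndependent.of_comp (Submodule.subtype _)
      exact hli
    have h1 := hli'.fintype_card_le_finrank
    have h2 := finrank_span_finset_le_card (R := ℂ) Fs
    have h3 : Fs.card ≤ N := by
      refine Finset.card_image_le.trans ?_
      simp
    simp only [Fintype.card_fin] at h1
    have h4 : Module.finrank ℂ (Submodule.span ℂ (Fs : Set (ℝ → ℂ))) ≤ Fs.card := h2
    omega
  rw [Fintype.not_linearIndependent_iff] at hfin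
  obtain ⟨c, hc0, hcne⟩ := hfin
  refine ⟨c, hcne, ?_⟩
  have hδ : (0 : ℝ) < (2 : ℝ)⁻¹ ^ j := by positivity
  have hδ1 : (2 : ℝ)⁻¹ ^ j ≤ 1 := pow_le_one₀ (by norm_num) (by norm_num)
  set T : ℝ → ℂ := (∑ i, c i • eF (s i)) * Q with hT
  set fM : ℝ → ℂ := fun t => ∑ i, c i * ∑ l ∈ Ls, a l * φ (t - (s i + l)) with hfM
  have hshift : ∀ u : ℝ, Integrable (fun t => φ (t - u)) := fun u => hint.comp_sub_right u
  have hfMi : Integrable fM := by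
    refine integrable_finsetSum _ fun i _ => Integrable.const_mul ?_ _
    exact integrable_finsetSum _ fun l _ => (hshift _).const_mul _
  have hfMc : Continuous fM := by
    simp only [hfM]; fun_prop
  have hfour : ∀ y, ∫ x, eF y x * fM x = T y * ∫ x, eF y x * φ x := by
    intro y
    have hI : ∀ u : ℝ, Integrable (fun x => eF y x * φ (x - u)) := fun u =>
      (hshift u).bdd_mul (c := 1) (continuous_eF y).aestronglyMeasurable
        (Filter.Eventually.of_forall fun x => (norm_eF y x).le)
    have e1 : ∀ x, eF y x * fM x = ∑ i, ∑ l ∈ Ls, (c i * a l) * (eF y x * φ (x - (s i + l))) := by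
      intro x
      simp only [hfM, Finset.mul_sum]
      refine Finset.sum_congr rfl fun i _ => Finset.sum_congr rfl fun l _ => ?_
      ring
    simp_rw [e1]
    rw [integral_finsetSum Finset.univ (fun i _ => integrable_finsetSum Ls fun l _ => (hI (s i + l)).const_mul (c i * a l))]
    have e2 : ∀ i, ∫ x, ∑ l ∈ Ls, (c i * a l) * (eF y x * φ (x - (s i + l))) =
        ∑ l ∈ Ls, (c i * a l) * (eF (s i) y * eF l y * ∫ x, eF y x * φ x) := by
      intro i
      rw [integral_finsetSum _ (fun l _ => (hI _).const_mul _)]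
      refine Finset.sum_congr rfl fun l _ => ?_
      rw [integral_const_mul, integral_eF_shift, eF_add, Pi.mul_apply]
    simp_rw [e2]
    simp only [hT, hQ, Pi.mul_apply, Finset.sum_apply, Pi.smul_apply, smul_eq_mul]
    rw [Finset.sum_mul_sum, Finset.sum_mul]
    refine Finset.sum_congr rfl fun i _ => ?_
    rw [Finset.sum_mul]
    refine Finset.sum_congr rfl fun l _ => ?_
    ring
  have hTb : ∃ K1 : ℝ, 0 ≤ K1 ∧ ∀ y, ‖T y‖ ≤ K1 := by
    refine ⟨(∑ i, ‖c i‖) * ∑ l ∈ Ls, ‖a l‖, by positivity, fun y => ?_⟩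
    simp only [hT, hQ, Pi.mul_apply, Finset.sum_apply, Pi.smul_apply, smul_eq_mul, norm_mul]
    gcongr
    · refine (norm_sum_le _ _).trans (Finset.sum_le_sum fun i _ => ?_)
      rw [norm_mul, norm_eF, mul_one]
    · refine (norm_sum_le _ _).trans (Finset.sum_le_sum fun i _ => ?_)
      rw [norm_mul, norm_eF, mul_one]
  obtain ⟨K1, hK1, hTb⟩ := hTb
  have hfM0 : ∀ t ∈ Set.Ioo (0 : ℝ) ((2 : ℝ)⁻¹ ^ j), fM t = 0 := by
    refine weak_support hfMc hfMi (S := (Set.Ioo (0 : ℝ) ((2 : ℝ)⁻¹ ^ j))ᶜ) isOpen_Ioo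
      (fun s hs => hs) (fun J => T * ∏ i ∈ Finset.Icc 1 J, mk i) j ?_ ?_ (K1 * K) p ?_
    · intro J hJ
      obtain ⟨k, rfl⟩ := Nat.exists_eq_add_of_le hJ
      obtain ⟨v, hv, hv'⟩ := high_prod hmk j k
      have e : T * ∏ i ∈ Finset.Icc 1 (j + k), mk i = (∑ i, c i • r i) * v := by
        rw [hv', ← mul_assoc]
        congr 1
        have : T * low = ∑ i, c i • (w i + r i) := by
          simp_rw [hwr, hT, Finset.sum_mul, smul_mul_assoc]
        rw [this]
        simp_rw [smul_add, Finset.sum_add_distrib, hc0, zero_add]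
      simp only [e]
      refine TS_mul ?_ (Submodule.sum_mem _ fun i _ => Submodule.smul_mem _ _ (hr i)) hv
      rintro _ ⟨n, hn, rfl⟩ x ⟨hx1, hx2⟩ ⟨h1, h2⟩
      have hk : (0 : ℝ) < (2 : ℝ)⁻¹ ^ (j + k) := by positivity
      have hNk : (0 : ℝ) ≤ N * (2 : ℝ)⁻¹ ^ (j + k) := by positivity
      rcases hn with hn | hn
      · have hn' : (n : ℝ) ≤ -N := by exact_mod_cast hn
        nlinarith
      · have hn' : (1 : ℝ) ≤ n := by exact_mod_cast hn
        nlinarith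
    · intro y
      rw [hfour y]
      exact (hlim y).const_mul _
    · intro J y
      rw [Pi.mul_apply, norm_mul, mul_assoc]
      have := hbd J y
      exact mul_le_mul (hTb y) this (norm_nonneg _) hK1
  have hfan : AnalyticOnNhd ℝ (fun t => ∑ i, c i * g (t - s i)) Set.univ := by
    intro t _
    refine Finset.analyticAt_fun_sum _ fun i _ => analyticAt_const.mul ?_
    have h1 : AnalyticAt ℝ (fun x : ℝ => x - s i) t := analyticAt_id.fun_sub analyticAt_const
    exact AnalyticAt.fun_comp (g := g) (f := fun x : ℝ => x - s i) (hgan (t - s i) trivial) h1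
  have hz : (fun t => ∑ i, c i * g (t - s i)) = fun _ => 0 := by
    refine hfan.eq_of_eventuallyEq (z₀ := (2 : ℝ)⁻¹ ^ j / 2) (fun t _ => analyticAt_const) ?_
    filter_upwards [Ioo_mem_nhds (by linarith : (0 : ℝ) < (2 : ℝ)⁻¹ ^ j / 2) (by linarith : (2 : ℝ)⁻¹ ^ j / 2 < (2 : ℝ)⁻¹ ^ j)] with t ht
    rw [← hfM0 t ht]
    simp only [hfM]
    refine Finset.sum_congr rfl fun i _ => ?_
    rw [hg, tsum_eq_sum (s := Ls)]
    · congr 1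
      refine Finset.sum_congr rfl fun l _ => ?_
      rw [sub_sub]
    · intro l hl
      by_contra hne
      have h1 := hR _ (right_ne_zero_of_mul hne)
      have h2 : |s i| ≤ ∑ i, |s i| := Finset.single_le_sum (f := fun i => |s i|) (fun _ _ => abs_nonneg _) (Finset.mem_univ i)
      have h3 := abs_le.1 h1
      have h4 := abs_le.1 h2
      apply hl
      rw [hLs, Finset.mem_Icc]
      constructor
      · have : -(M : ℝ) ≤ l := by linarith [ht.1, ht.2]
        exact_mod_cast this
      · have : (l : ℝ) ≤ M := by linarith [ht.1, ht.2]
        exact_mod_cast this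
  intro t
  exact congrFun hz t

lemma fourierExt_deriv {φ : ℝ → ℂ} (hc : Continuous φ) (hs : HasCompactSupport φ) :
    deriv (fourierExt φ) =
      fourierExt (fun x => (-(2 * (Real.pi : ℂ) * Complex.I * (x : ℂ))) * φ x) := by
  funext z
  refine HasDerivAt.deriv ?_
  have hcF : ∀ z : ℂ, Continuous (fun x : ℝ => φ x * Complex.exp (-(2 * (Real.pi : ℂ) * Complex.I * (x : ℂ) * z))) := by
    intro z; fun_prop
  have hsF : ∀ z : ℂ, HasCompactSupport (fun x : ℝ => φ x * Complex.exp (-(2 * (Real.pi : ℂ) * Complex.I * (x : ℂ) * z))) :=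
    fun z => hs.mul_right
  have hbs : HasCompactSupport (fun x : ℝ => ‖φ x‖ * (2 * Real.pi * |x| * Real.exp (2 * Real.pi * |x| * (‖z‖ + 1)))) :=
    hs.norm.mul_right
  refine (hasDerivAt_integral_of_dominated_loc_of_deriv_le
    (F' := fun z x => (-(2 * (Real.pi : ℂ) * Complex.I * (x : ℂ))) * φ x * Complex.exp (-(2 * (Real.pi : ℂ) * Complex.I * (x : ℂ) * z)))
    (bound := fun x : ℝ => ‖φ x‖ * (2 * Real.pi * |x| * Real.exp (2 * Real.pi * |x| * (‖z‖ + 1))))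
    (Metric.ball_mem_nhds z one_pos)
    (Filter.Eventually.of_forall fun z => (hcF z).aestronglyMeasurable)
    ((hcF z).integrable_of_hasCompactSupport (hsF z)) ?_ ?_ ?_ ?_).2
  · refine Continuous.aestronglyMeasurable ?_
    fun_prop
  · refine Filter.Eventually.of_forall fun x y hy => ?_
    have hy' : ‖y‖ ≤ ‖z‖ + 1 := by
      have := norm_sub_norm_le y z
      rw [Metric.mem_ball, dist_eq_norm] at hy
      linarith
    have hn : ‖-(2 * (Real.pi : ℂ) * Complex.I * (x : ℂ))‖ = 2 * Real.pi * |x| := by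
      simp [abs_of_pos Real.pi_pos]
    rw [norm_mul, norm_mul, hn, mul_comm _ ‖φ x‖, mul_assoc ‖φ x‖]
    gcongr
    refine (Complex.norm_exp_le_exp_norm _).trans ?_
    rw [norm_neg, norm_mul, ← norm_neg (2 * (Real.pi : ℂ) * Complex.I * (x : ℂ)), hn]
    gcongr
  · refine Continuous.integrable_of_hasCompactSupport ?_ hbs
    fun_prop
  · refine Filter.Eventually.of_forall fun x y hy => ?_
    have h1 : HasDerivAt (fun y : ℂ => -(2 * (Real.pi : ℂ) * Complex.I * (x : ℂ) * y))
        (-(2 * (Real.pi : ℂ) * Complex.I * (x : ℂ))) y := by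
      simpa using! ((hasDerivAt_id' y).const_mul (2 * (Real.pi : ℂ) * Complex.I * (x : ℂ))).fun_neg
    have h2 := h1.cexp.const_mul (φ x)
    have e : -(2 * (Real.pi : ℂ) * Complex.I * (x : ℂ)) * φ x *
        Complex.exp (-(2 * (Real.pi : ℂ) * Complex.I * (x : ℂ) * y)) =
        φ x * (Complex.exp (-(2 * (Real.pi : ℂ) * Complex.I * (x : ℂ) * y)) *
          -(2 * (Real.pi : ℂ) * Complex.I * (x : ℂ))) := by ring
    simp only [e]
    exact h2

lemma fourierExt_iter (k : ℕ) : ∀ {φ : ℝ → ℂ} (_ : Continuous φ) (_ : HasCompactSupport φ),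
    iteratedDeriv k (fourierExt φ) =
      fourierExt (fun x => (-(2 * (Real.pi : ℂ) * Complex.I * (x : ℂ))) ^ k * φ x) := by
  induction k with
  | zero => intro φ _ _; simp
  | succ k ih =>
    intro φ hc hs
    rw [iteratedDeriv_succ', fourierExt_deriv hc hs]
    have hs' : HasCompactSupport (fun x : ℝ => -(2 * (Real.pi : ℂ) * Complex.I * (x : ℂ)) * φ x) :=
      hs.mul_left
    rw [ih (by fun_prop) hs']
    congr 1; funext x
    rw [pow_succ]; ring

lemma poisson_zero {f : ℝ → ℂ} (hc : Continuous f) (hs : HasCompactSupport f)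
    (h : ∀ t : ℝ, ∑' l : ℤ, f (t - l) = 0) (n : ℤ) : ∫ x, eF n x * f x = 0 := by
  let F : C(ℝ, ℂ) := ⟨f, hc⟩
  have hsum : ∀ K : TopologicalSpace.Compacts ℝ,
      Summable fun n : ℤ => ‖(F.comp (ContinuousMap.addRight (n : ℝ))).restrict K‖ := by
    intro K
    obtain ⟨R, hR⟩ := hs.isCompact.isBounded.exists_norm_le
    obtain ⟨R', hR'⟩ := K.isCompact.isBounded.exists_norm_le
    obtain ⟨M, hM⟩ := exists_nat_ge (R + R')
    refine summable_of_ne_finset_zero (s := Finset.Icc (-(M : ℤ)) M) fun n hn => ?_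
    rw [norm_eq_zero]
    ext ⟨x, hx⟩
    simp only [ContinuousMap.restrict_apply, ContinuousMap.comp_apply, ContinuousMap.coe_addRight,
      ContinuousMap.zero_apply]
    change f (x + n) = 0
    by_contra hne
    have h1 := abs_le.1 (hR _ (subset_tsupport _ hne))
    have h2 := abs_le.1 (hR' x hx)
    apply hn
    rw [Finset.mem_Icc]
    constructor
    · have : -(M : ℝ) ≤ n := by linarith
      exact_mod_cast this
    · have : (n : ℝ) ≤ M := by linarith
      exact_mod_cast this
  have h1 := Real.fourierCoeff_tsum_comp_add hsum n
  rw [fourier_eq_eF] at h1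
  change _ = ∫ x, eF n x * f x at h1
  rw [← h1, fourierCoeff_eq_intervalIntegral _ n 0]
  have : ∀ x : ℝ, (∑' n : ℤ, F.comp (ContinuousMap.addRight (n • (1 : ℝ)))) x = 0 := by
    intro x
    have h2 := ContinuousMap.tsum_apply (ContinuousMap.summable_of_locally_summable_norm hsum) x
    simp only [zsmul_one]
    rw [← h2]
    simp only [ContinuousMap.comp_apply, ContinuousMap.coe_addRight]
    rw [← h x, ← (Equiv.neg ℤ).tsum_eq]
    refine tsum_congr fun l => ?_
    simp [F, sub_eq_add_neg]
  simp only [Function.Periodic.lift_coe, this]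
  simp

lemma fwd_unique (n : ℕ) : ∀ e : ℤ → ℂ, (fwdDiff (1 : ℤ))^[n] e = 0 → (∀ i : ℕ, i < n → e i = 0) →
    e = 0 := by
  induction n with
  | zero => intro e h _; simpa using h
  | succ n ih =>
    intro e h h0
    have h1 : fwdDiff (1 : ℤ) e = 0 := by
      refine ih _ ?_ ?_
      · rwa [Function.iterate_succ_apply] at h
      · intro i hi
        have h2 := h0 (i + 1) (by omega)
        push_cast at h2
        simp [fwdDiff, h0 i (by omega), h2]
    have h2 : ∀ l : ℤ, e (l + 1) = e l := fun l => by
      have := congrFun h1 l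
      simpa [fwdDiff, sub_eq_zero] using this
    funext l
    have h00 : e 0 = 0 := by simpa using h0 0 (by omega)
    induction l using Int.induction_on with
    | zero => exact h00
    | succ i hi => rw [h2]; exact hi
    | pred i hi => 
      have := h2 (-(i : ℤ) - 1)
      rw [sub_add_cancel] at this
      rw [← this]; exact hi

lemma poly_fwd (P : Polynomial ℂ) (n : ℕ) (y : ℤ) :
    (fwdDiff (1 : ℤ))^[n] (fun l : ℤ => P.eval (l : ℂ)) y = (fwdDiff (1 : ℂ))^[n] P.eval (y : ℂ) := by
  rw [fwdDiff_iter_eq_sum_shift, fwdDiff_iter_eq_sum_shift]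
  refine Finset.sum_congr rfl fun k _ => ?_
  simp

lemma fwd_poly (d : ℕ) (b : ℤ → ℂ) (h : (fwdDiff (1 : ℤ))^[d + 1] b = 0) :
    ∃ q : Polynomial ℂ, q.natDegree ≤ d ∧ ∀ l, b l = q.eval (l : ℂ) := by
  let q := Lagrange.interpolate (Finset.range (d + 1)) (fun i : ℕ => (i : ℂ)) (fun i : ℕ => b i)
  have hinj : Set.InjOn (fun i : ℕ => (i : ℂ)) (Finset.range (d + 1) : Set ℕ) :=
    fun x _ y _ hxy => Nat.cast_injective hxy
  have hqd : q.natDegree ≤ d := by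
    have h1 := Lagrange.degree_interpolate_lt (fun i : ℕ => b i) hinj
    rw [Finset.card_range] at h1
    by_cases hq : q = 0
    · simp [hq]
    · exact Nat.lt_succ_iff.1 ((Polynomial.natDegree_lt_iff_degree_lt hq).2 h1)
  refine ⟨q, hqd, ?_⟩
  have h0 : b - (fun l : ℤ => q.eval (l : ℂ)) = 0 := by
    refine fwd_unique (d + 1) _ ?_ ?_
    · have e : b - (fun l : ℤ => q.eval (l : ℂ)) = b + (-1 : ℂ) • (fun l : ℤ => q.eval (l : ℂ)) := by
        funext l; simp [sub_eq_add_neg]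
      rw [e, fwdDiff_iter_add, h, fwdDiff_iter_const_smul]
      funext y
      simp only [Pi.add_apply, Pi.zero_apply, Pi.smul_apply, zero_add]
      rw [poly_fwd, Polynomial.fwdDiff_iter_eq_zero_of_degree_lt (by omega)]
      simp
    · intro i hi
      have := Lagrange.eval_interpolate_at_node (fun i : ℕ => b i) hinj (Finset.mem_range.2 hi)
      simp only [Pi.sub_apply, Int.cast_natCast]
      rw [this]; simp
  intro l
  have := congrFun h0 l
  simpa [sub_eq_zero] using this

lemma supp_finset {φ : ℝ → ℂ} (hsupp : HasCompactSupport φ) (t : ℝ) :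
    ∃ L : Finset ℤ, ∀ l ∉ L, φ (t - l) = 0 := by
  obtain ⟨R, hR⟩ := hsupp.isCompact.isBounded.exists_norm_le
  obtain ⟨M, hM⟩ := exists_nat_ge (R + |t|)
  refine ⟨Finset.Icc (-(M : ℤ)) M, fun l hl => ?_⟩
  by_contra hne
  have h1 := abs_le.1 (hR _ (subset_tsupport _ hne))
  have h2 := neg_abs_le t
  have h3 := le_abs_self t
  apply hl
  rw [Finset.mem_Icc]
  constructor
  · have : -(M : ℝ) ≤ l := by linarith
    exact_mod_cast this
  · have : (l : ℝ) ≤ M := by linarith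
    exact_mod_cast this

/-- The weighted generator. -/
noncomputable def wPhi (lam : ℂ) (φ : ℝ → ℂ) : ℝ → ℂ := fun x => Complex.exp (-(lam * x)) * φ x

lemma wPhi_cont {lam : ℂ} {φ : ℝ → ℂ} (hc : Continuous φ) : Continuous (wPhi lam φ) := by
  unfold wPhi; fun_prop

lemma wPhi_supp {lam : ℂ} {φ : ℝ → ℂ} (hs : HasCompactSupport φ) :
    HasCompactSupport (wPhi lam φ) := hs.mul_left

lemma shift_formula {φ g : ℝ → ℂ} {lam : ℂ} {a : ℤ → ℂ}
    (hg : ∀ t, g t = ∑' l : ℤ, a l * φ (t - l)) (t : ℝ) (m : ℤ) :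
    Complex.exp (-(lam * (t + m))) * g (t + m) =
      ∑' l : ℤ, (Complex.exp (-(lam * ((l + m : ℤ) : ℂ))) * a (l + m)) * wPhi lam φ (t - l) := by
  rw [hg, ← (Equiv.addRight m).tsum_eq, ← tsum_mul_left]
  refine tsum_congr fun l => ?_
  simp only [Equiv.coe_addRight, wPhi]
  have e1 : t + (m : ℝ) - ((l + m : ℤ) : ℝ) = t - l := by push_cast; ring
  have e2 : Complex.exp (-(lam * (t + m))) =
      Complex.exp (-(lam * ((l + m : ℤ) : ℂ))) * Complex.exp (-(lam * ((t - l : ℝ) : ℂ))) := by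
    rw [← Complex.exp_add]; congr 1; push_cast; ring
  rw [e1, e2]; ring

lemma poly_seq {φ : ℝ → ℂ} (hsupp : HasCompactSupport φ)
    (hli : ∀ b : ℤ → ℂ, (∀ t : ℝ, ∑' l : ℤ, b l * φ (t - (l : ℝ)) = 0) → ∀ l, b l = 0)
    {lam : ℂ} {d : ℕ} {ω : ℕ → ℝ → ℂ}
    (hper : ∀ k ≤ d, ∀ t : ℝ, ω k (t + 1) = ω k t)
    (hωd : ∃ t : ℝ, ω d t ≠ 0)
    {p : ℕ → Polynomial ℂ} (hdeg : ∀ k ≤ d, (p k).degree = k)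
    {a : ℤ → ℂ}
    (hg : ∀ t : ℝ,
      Complex.exp (lam * (t : ℂ)) * ∑ k ∈ Finset.range (d + 1), (p k).eval (t : ℂ) * ω k t
        = ∑' l : ℤ, a l * φ (t - (l : ℝ))) :
    ∃ q : Polynomial ℂ, q ≠ 0 ∧ q.natDegree = d ∧
      ∀ l : ℤ, Complex.exp (-(lam * l)) * a l = q.eval (l : ℂ) := by
  set b : ℤ → ℂ := fun l => Complex.exp (-(lam * l)) * a l with hb
  have hnat : ∀ k ≤ d, (p k).natDegree = k := fun k hk =>
    Polynomial.natDegree_eq_of_degree_eq_some (hdeg k hk)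
  have hperN : ∀ k ≤ d, ∀ (t : ℝ) (m : ℕ), ω k (t + m) = ω k t := by
    intro k hk t m
    induction m with
    | zero => simp
    | succ m ih => 
      push_cast
      rw [← add_assoc, hper k hk, ih]
  have hliW : ∀ b : ℤ → ℂ, (∀ t : ℝ, ∑' l : ℤ, b l * wPhi lam φ (t - (l : ℝ)) = 0) → ∀ l, b l = 0 := by
    intro b' hb' l
    have := hli (fun l => Complex.exp (lam * l) * b' l) (fun t => by
      have h1 := hb' t
      have h2 : ∑' l : ℤ, Complex.exp (lam * l) * b' l * φ (t - (l : ℝ)) =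
          Complex.exp (lam * t) * ∑' l : ℤ, b' l * wPhi lam φ (t - (l : ℝ)) := by
        rw [← tsum_mul_left]
        refine tsum_congr fun l => ?_
        have : Complex.exp (lam * l) = Complex.exp (lam * t) * Complex.exp (-(lam * ((t - l : ℝ) : ℂ))) := by
          rw [← Complex.exp_add]; congr 1; push_cast; ring
        rw [wPhi, this]; ring
      rw [h2, h1, mul_zero]) l
    exact (mul_eq_zero.1 this).resolve_left (Complex.exp_ne_zero _)
  have hE : ∀ (t : ℝ) (m : ℕ), ∑ k ∈ Finset.range (d + 1), (p k).eval ((t : ℂ) + m) * ω k t =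
      ∑' l : ℤ, b (l + m) * wPhi lam φ (t - l) := by
    intro t m
    have h1 := shift_formula (lam := lam) (fun t => (hg t)) t m
    simp only [hb]
    rw [← h1, ← mul_assoc, ← Complex.exp_add]
    have : (-(lam * ((t : ℂ) + (m : ℤ))) + lam * ((t + (m : ℤ) : ℝ) : ℂ)) = 0 := by push_cast; ring
    rw [this, Complex.exp_zero, one_mul]
    refine Finset.sum_congr rfl fun k hk => ?_
    have hk' : k ≤ d := by have := Finset.mem_range.1 hk; omega
    have h2 := hperN k hk' t m
    push_cast
    rw [h2]
  have hD : ∀ (n : ℕ) (t : ℝ), ∑' l : ℤ, ((fwdDiff (1 : ℤ))^[n] b l) * wPhi lam φ (t - l) =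
      ∑ k ∈ Finset.range (d + 1), ((fwdDiff (1 : ℂ))^[n] (p k).eval (t : ℂ)) * ω k t := by
    intro n t
    obtain ⟨L, hL⟩ := supp_finset (wPhi_supp (lam := lam) hsupp) t
    have hE' : ∀ m : ℕ, ∑ l ∈ L, b (l + m) * wPhi lam φ (t - l) = 
        ∑ k ∈ Finset.range (d + 1), (p k).eval ((t : ℂ) + m) * ω k t := by
      intro m
      rw [hE, tsum_eq_sum (s := L)]
      intro l hl; rw [hL l hl, mul_zero]
    rw [tsum_eq_sum (s := L) (fun l hl => by rw [hL l hl, mul_zero])]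
    simp_rw [fwdDiff_iter_eq_sum_shift, Finset.sum_mul]
    rw [Finset.sum_comm]
    conv_rhs => rw [Finset.sum_comm]
    refine Finset.sum_congr rfl fun m _ => ?_
    simp_rw [smul_mul_assoc, ← Finset.smul_sum]
    congr 1
    simpa using hE' m
  have hDd1 : (fwdDiff (1 : ℤ))^[d + 1] b = 0 := by
    funext l
    refine hliW _ (fun t => ?_) l
    rw [hD]
    refine Finset.sum_eq_zero fun k hk => ?_
    have hk' : k < d + 1 := Finset.mem_range.1 hk
    rw [Polynomial.fwdDiff_iter_eq_zero_of_degree_lt (by rw [hnat k (by omega)]; exact hk')]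
    simp
  obtain ⟨q, hqd, hq⟩ := fwd_poly d b hDd1
  have hbq : b = fun l : ℤ => q.eval (l : ℂ) := funext hq
  have hne : (fwdDiff (1 : ℤ))^[d] b ≠ 0 := by
    intro h0
    obtain ⟨t, ht⟩ := hωd
    have h1 := hD d t
    rw [h0] at h1
    simp only [Pi.zero_apply, zero_mul, tsum_zero] at h1
    rw [Finset.sum_range_succ, Finset.sum_eq_zero, zero_add] at h1
    · have h2 := (p d).fwdDiff_iter_degree_eq_factorial
      rw [hnat d le_rfl] at h2
      rw [h2] at h1
      have h3 : (p d).leadingCoeff ≠ 0 := by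
        rw [Polynomial.leadingCoeff_ne_zero]
        intro h; have := hdeg d le_rfl; rw [h] at this; simp at this
      have h4 : ((Nat.factorial d : ℕ) : ℂ) ≠ 0 := by exact_mod_cast Nat.factorial_ne_zero d
      apply mul_ne_zero (mul_ne_zero h3 h4) ht
      simpa using h1.symm
    · intro k hk
      have hk' : k < d := Finset.mem_range.1 hk
      rw [Polynomial.fwdDiff_iter_eq_zero_of_degree_lt (by rw [hnat k (by omega)]; exact hk')]
      simp
  have hq0 : q ≠ 0 := by
    rintro rfl
    apply hne
    funext y
    rw [hbq, poly_fwd]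
    rw [fwdDiff_iter_eq_sum_shift]; simp
  refine ⟨q, hq0, ?_, hq⟩
  refine le_antisymm hqd ?_
  by_contra hlt
  apply hne
  funext y
  rw [hbq, poly_fwd, Polynomial.fwdDiff_iter_eq_zero_of_degree_lt (by omega)]
  simp

lemma iter_deriv_comp (q : Polynomial ℂ) (r : ℂ) (j : ℕ) :
    Polynomial.derivative^[j] (q.comp (Polynomial.X + Polynomial.C r)) =
      (Polynomial.derivative^[j] q).comp (Polynomial.X + Polynomial.C r) := by
  induction j with
  | zero => rfl
  | succ j ih =>
    rw [Function.iterate_succ_apply', ih, Function.iterate_succ_apply', Polynomial.derivative_comp]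
    simp

/-- The polynomial attached to a frequency and a differentiation order. -/
noncomputable def Rp (d : ℕ) (D : ℕ → ℤ → ℂ) (q : Polynomial ℂ) (n : ℤ) (j : ℕ) : Polynomial ℂ :=
  ∑ k ∈ Finset.range (d + 1), Polynomial.C (((2 * (Real.pi : ℂ) * Complex.I) ^ k)⁻¹ * D k n) *
    Polynomial.hasseDeriv k (Polynomial.derivative^[j] q)

lemma poly_taylor (P : Polynomial ℂ) {d : ℕ} (hP : P.natDegree ≤ d) (w x : ℂ) :
    P.eval (w - x) = ∑ k ∈ Finset.range (d + 1), (-x) ^ k * (Polynomial.hasseDeriv k P).eval w := by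
  have h := Polynomial.taylor_eval w P (-x)
  rw [show w - x = -x + w by ring, ← h, Polynomial.eval_eq_sum_range' (n := d + 1)]
  · refine Finset.sum_congr rfl fun k _ => ?_
    rw [Polynomial.taylor_coeff, mul_comm]
  · rw [Polynomial.natDegree_taylor]; omega

lemma natDegree_iter_deriv (q : Polynomial ℂ) (j : ℕ) :
    (Polynomial.derivative^[j] q).natDegree = q.natDegree - j := by
  induction j with
  | zero => simp
  | succ j ih => 
    rw [Function.iterate_succ_apply', Polynomial.natDegree_derivative, ih]; omega

lemma Rp_eval {φ : ℝ → ℂ} (hc : Continuous φ) (hs : HasCompactSupport φ) {lam : ℂ} {d : ℕ}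
    {q : Polynomial ℂ} (hq : q.natDegree ≤ d) (n : ℤ) (j : ℕ) (w : ℂ) :
    (Rp d (fun k n => iteratedDeriv k (fourierExt φ)
        (-(Complex.I * lam) / (2 * (Real.pi : ℂ)) + (n : ℂ))) q n j).eval w =
      ∫ x : ℝ, eF n x * ((Polynomial.derivative^[j] q).eval (w - x) * wPhi lam φ x) := by
  have hqj : (Polynomial.derivative^[j] q).natDegree ≤ d := by rw [natDegree_iter_deriv]; omega
  simp_rw [poly_taylor _ hqj, Finset.sum_mul, Finset.mul_sum]
  rw [integral_finsetSum]
  · rw [Rp, Polynomial.eval_finsetSum]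
    refine Finset.sum_congr rfl fun k _ => ?_
    rw [Polynomial.eval_mul, Polynomial.eval_C, fourierExt_iter k hc hs, fourierExt,
      ← integral_const_mul, ← integral_mul_const]
    congr 1; funext x
    have h2 : (2 * (Real.pi : ℂ) * Complex.I) ≠ 0 := Complex.two_pi_I_ne_zero
    have hpi : (Real.pi : ℂ) ≠ 0 := by exact_mod_cast Real.pi_ne_zero
    have e1 : (-(2 * (Real.pi : ℂ) * Complex.I * (x : ℂ))) ^ k =
        (2 * (Real.pi : ℂ) * Complex.I) ^ k * (-(x : ℂ)) ^ k := by
      rw [← mul_pow]; congr 1; ring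
    have e2 : Complex.exp (-(2 * (Real.pi : ℂ) * Complex.I * (x : ℂ) *
        (-(Complex.I * lam) / (2 * (Real.pi : ℂ)) + (n : ℂ)))) = eF n x * Complex.exp (-(lam * x)) := by
      rw [eF, ← Complex.exp_add]; congr 1
      field_simp
      push_cast
      linear_combination (x : ℂ) * lam * Complex.I_sq
    rw [e1, e2, wPhi]
    field_simp
  · intro k _
    refine Continuous.integrable_of_hasCompactSupport ?_ ?_
    · have := continuous_eF n
      have := wPhi_cont (lam := lam) hc
      fun_prop
    · exact ((wPhi_supp hs).mul_left).mul_left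

lemma dep_fourier {φ : ℝ → ℂ} (hc : Continuous φ) (hs : HasCompactSupport φ) {lam : ℂ} {d : ℕ}
    {q : Polynomial ℂ} (hq : q.natDegree ≤ d) {a : ℤ → ℂ}
    (haq : ∀ l : ℤ, Complex.exp (-(lam * l)) * a l = q.eval (l : ℂ))
    {g : ℝ → ℂ} (hg : ∀ t, g t = ∑' l : ℤ, a l * φ (t - l))
    {ι : Type} [Fintype ι] (c : ι → ℂ) (s : ι → ℝ) (hdep : ∀ t, ∑ i, c i * g (t - s i) = 0)
    (n : ℤ) (j : ℕ) :
    ∑ i, (c i * Complex.exp (-(lam * s i))) * (eF (s i) n *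
      (Rp d (fun k n => iteratedDeriv k (fourierExt φ)
        (-(Complex.I * lam) / (2 * (Real.pi : ℂ)) + (n : ℂ))) q n j).eval (-(s i : ℂ))) = 0 := by
  classical
  set Φ := wPhi lam φ with hΦ
  have hΦc : Continuous Φ := wPhi_cont hc
  have hΦs : HasCompactSupport Φ := wPhi_supp hs
  set c' : ι → ℂ := fun i => c i * Complex.exp (-(lam * s i)) with hc'
  set qj := Polynomial.derivative^[j] q with hqj
  let f : ℝ → ℂ := fun t => ∑ i, c' i * (qj.eval (-(t : ℂ)) * Φ (t - s i))
  have hper : ∀ t : ℝ, ∑' l : ℤ, f (t - l) = 0 := by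
    intro t
    have hLi : ∀ i, ∃ L : Finset ℤ, ∀ l ∉ L, Φ (t - s i - l) = 0 := fun i => supp_finset hΦs (t - s i)
    choose Li hLi using hLi
    let L : Finset ℤ := Finset.univ.biUnion Li
    have hL : ∀ i, ∀ l ∉ L, Φ (t - s i - l) = 0 := fun i l hl => hLi i l fun h =>
      hl (Finset.mem_biUnion.2 ⟨i, Finset.mem_univ _, h⟩)
    let W : Polynomial ℂ := ∑ i, ∑ l ∈ L, Polynomial.C (c' i * Φ (t - s i - l)) *
      q.comp (Polynomial.X + Polynomial.C (l : ℂ))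
    have hWm : ∀ m : ℤ, W.eval (m : ℂ) = 0 := by
      intro m
      have h0 := hdep (t + m)
      have h1 : W.eval (m : ℂ) = ∑ i, Complex.exp (-(lam * (t + m))) * (c i * g (t + m - s i)) := by
        simp only [W, Polynomial.eval_finsetSum]
        refine Finset.sum_congr rfl fun i _ => ?_
        have h2 := shift_formula (lam := lam) hg (t - s i) m
        rw [tsum_eq_sum (s := L) (fun l hl => by rw [← hΦ, hL i l hl, mul_zero])] at h2
        simp_rw [haq] at h2
        have e : t + m - s i = t - s i + m := by ring
        have e3 : Complex.exp (-(lam * (t + m))) = Complex.exp (-(lam * s i)) *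
            Complex.exp (-(lam * (((t - s i : ℝ) : ℂ) + m))) := by
          rw [← Complex.exp_add]; congr 1; push_cast; ring
        rw [e, e3]
        calc _ = c' i * ∑ l ∈ L, q.eval ((l + m : ℤ) : ℂ) * Φ (t - s i - l) := by
              rw [Finset.mul_sum]
              refine Finset.sum_congr rfl fun l _ => ?_
              simp only [Polynomial.eval_mul, Polynomial.eval_C, Polynomial.eval_comp,
                Polynomial.eval_add, Polynomial.eval_X]
              push_cast
              rw [add_comm (m : ℂ)]; ring
          _ = _ := by rw [← h2, hc']; ring
      rw [h1, ← Finset.mul_sum, h0, mul_zero]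
    have hW : W = 0 := by
      refine Polynomial.eq_zero_of_infinite_isRoot _ ?_
      refine Set.Infinite.mono (s := Set.range (fun m : ℤ => (m : ℂ))) ?_ ?_
      · rintro _ ⟨m, rfl⟩; exact hWm m
      · exact Set.infinite_range_of_injective Int.cast_injective
    have hWj : (Polynomial.derivative^[j] W).eval (-(t : ℂ)) = 0 := by
      rw [hW, Polynomial.iterate_derivative_zero]; simp
    have hfz : ∀ l ∉ L, f (t - l) = 0 := by
      intro l hl
      refine Finset.sum_eq_zero fun i _ => ?_
      rw [sub_right_comm, hL i l hl, mul_zero, mul_zero]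
    rw [tsum_eq_sum (s := L) hfz, ← hWj]
    simp only [W, Polynomial.iterate_derivative_sum, Polynomial.iterate_derivative_C_mul,
      iter_deriv_comp, Polynomial.eval_finsetSum, f]
    rw [Finset.sum_comm]
    refine Finset.sum_congr rfl fun i _ => Finset.sum_congr rfl fun l _ => ?_
    simp only [Polynomial.eval_mul, Polynomial.eval_C, Polynomial.eval_comp,
                Polynomial.eval_add, Polynomial.eval_X]
    rw [sub_right_comm]
    push_cast
    rw [neg_sub, sub_eq_neg_add]; ring
  have hterm : ∀ i, HasCompactSupport (fun t : ℝ => c' i * (qj.eval (-(t : ℂ)) * Φ (t - s i))) := by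
    intro i
    have : HasCompactSupport (fun t => Φ (t - s i)) := by
      have := hΦs.comp_homeomorph (Homeomorph.subRight (s i))
      exact this
    exact this.mul_left.mul_left
  have hqjc : Continuous fun t : ℝ => qj.eval (-(t : ℂ)) :=
    qj.continuous.comp (by fun_prop)
  have htc : ∀ i, Continuous (fun t : ℝ => c' i * (qj.eval (-(t : ℂ)) * Φ (t - s i))) := by
    intro i; fun_prop
  have hfc : Continuous f := continuous_finsetSum _ fun i _ => htc i
  have hfs : HasCompactSupport f := by
    have : ∀ S : Finset ι, HasCompactSupport
        (fun t : ℝ => ∑ i ∈ S, c' i * (qj.eval (-(t : ℂ)) * Φ (t - s i))) := by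
      intro S
      induction S using Finset.induction_on with
      | empty => simp only [Finset.sum_empty]; exact HasCompactSupport.zero
      | insert i S hi ih => 
        simp_rw [Finset.sum_insert hi]
        exact (hterm i).add ih
    exact this Finset.univ
  have hP := poisson_zero hfc hfs hper n
  rw [← hP]
  simp only [f, Finset.mul_sum]
  rw [integral_finsetSum]
  · refine Finset.sum_congr rfl fun i _ => ?_
    rw [Rp_eval hc hs hq]
    have e : ∀ x : ℝ, eF n x * (c' i * (qj.eval (-(x : ℂ)) * Φ (x - s i))) =
        (fun x : ℝ => c' i * (eF (s i) n * (eF n x * (qj.eval (-(s i : ℂ) - x) * Φ x)))) (x - s i) := by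
      intro x
      have e1 : eF n x = eF (s i) n * eF n (x - s i) := by
        simp only [eF, ← Complex.exp_add]; congr 1; push_cast; ring
      have e2 : -(s i : ℂ) - ((x - s i : ℝ) : ℂ) = -(x : ℂ) := by push_cast; ring
      simp only [e2, e1]; ring
    simp_rw [e]
    rw [integral_sub_right_eq_self (fun x : ℝ => c' i * (eF (s i) n * (eF n x * (qj.eval (-(s i : ℂ) - x) * Φ x)))) (s i),
      integral_const_mul, integral_const_mul]
  · intro i _
    exact ((continuous_eF n).mul (htc i)).integrable_of_hasCompactSupport (hterm i).mul_left

lemma Rp_deg {d : ℕ} {D : ℕ → ℤ → ℂ} {q : Polynomial ℂ} {n : ℤ} {k0 j : ℕ}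
    (hqd : q.natDegree = d) (hq : q ≠ 0) (hmin : ∀ k < k0, D k n = 0) (h0 : D k0 n ≠ 0)
    (hjd : k0 + j ≤ d) :
    Rp d D q n j ≠ 0 ∧ (Rp d D q n j).natDegree = d - (k0 + j) := by
  have hco : ∀ m, (Rp d D q n j).coeff m = ∑ k ∈ Finset.range (d + 1),
      ((((2 * (Real.pi : ℂ) * Complex.I) ^ k)⁻¹ * D k n) *
        (((m + k).choose k : ℂ) * ((m + k + j).descFactorial j * q.coeff (m + k + j)))) := by
    intro m
    rw [Rp, Polynomial.finsetSum_coeff]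
    refine Finset.sum_congr rfl fun k _ => ?_
    rw [Polynomial.coeff_C_mul, Polynomial.hasseDeriv_coeff, Polynomial.coeff_iterate_derivative,
      nsmul_eq_mul]
  have hc1 : (Rp d D q n j).coeff (d - (k0 + j)) ≠ 0 := by
    rw [hco, Finset.sum_eq_single k0]
    · have e : d - (k0 + j) + k0 + j = d := by omega
      rw [e]
      have hl : q.coeff d ≠ 0 := by
        rw [← hqd]; exact Polynomial.leadingCoeff_ne_zero.2 hq
      refine mul_ne_zero (mul_ne_zero (inv_ne_zero (pow_ne_zero _ Complex.two_pi_I_ne_zero)) h0)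
        (mul_ne_zero ?_ (mul_ne_zero ?_ hl))
      · exact_mod_cast (Nat.choose_pos (by omega)).ne'
      · have : d.descFactorial j ≠ 0 := by
          rw [Ne, Nat.descFactorial_eq_zero_iff_lt]; omega
        exact_mod_cast this
    · intro k _ hk
      rcases lt_or_gt_of_ne hk with h | h
      · rw [hmin k h]; simp
      · rw [Polynomial.coeff_eq_zero_of_natDegree_lt (by omega)]; simp
    · intro h; exact absurd (Finset.mem_range.2 (by omega)) h
  have hne : Rp d D q n j ≠ 0 := by
    intro h; rw [h] at hc1; simp at hc1
  refine ⟨hne, le_antisymm ?_ (Polynomial.le_natDegree_of_ne_zero hc1)⟩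
  rw [Polynomial.natDegree_le_iff_coeff_eq_zero]
  intro m hm
  rw [hco]
  refine Finset.sum_eq_zero fun k _ => ?_
  rcases lt_or_ge k k0 with h | h
  · rw [hmin k h]; simp
  · rw [Polynomial.coeff_eq_zero_of_natDegree_lt (by omega)]; simp

lemma li_final (F : Finset (ℕ × ℤ)) (P : ℕ × ℤ → Polynomial ℂ) (hP0 : ∀ x ∈ F, P x ≠ 0)
    (hinj : ∀ x ∈ F, ∀ y ∈ F, x.2 = y.2 → (P x).natDegree = (P y).natDegree → x = y)
    (ψ : ℕ × ℤ → ℂ)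
    (h : ∀ s : ℝ, ∑ x ∈ F, ψ x * (eF s x.2 * (P x).eval (-(s : ℂ))) = 0) :
    ∀ x ∈ F, ψ x = 0 := by
  classical
  have h1 : ∀ s : ℝ, ∑ x ∈ F, Polynomial.C (ψ x * eF s x.2) * P x = 0 := by
    intro s
    apply Polynomial.eq_zero_of_infinite_isRoot
    have hinf : (Set.range fun m : ℤ => (-((s + m : ℝ) : ℂ))).Infinite := by
      apply Set.infinite_range_of_injective
      intro m m' hm
      simpa using hm
    refine hinf.mono ?_
    rintro _ ⟨m, rfl⟩
    simp only [Set.mem_ofPred_eq, Polynomial.IsRoot.def, Polynomial.eval_finsetSum]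
    rw [← h (s + m)]
    refine Finset.sum_congr rfl fun x _ => ?_
    rw [Polynomial.eval_mul, Polynomial.eval_C, eF_add]
    have : eF (m : ℝ) (x.2 : ℝ) = 1 := by
      rw [eF, Complex.exp_eq_one_iff]
      exact ⟨-(m * x.2), by push_cast; ring⟩
    simp only [Pi.mul_apply, this, mul_one, mul_assoc]
  have h2 : ∀ (n : ℤ) (i : ℕ), ∑ x ∈ F.filter (fun x => x.2 = n), ψ x * (P x).coeff i = 0 := by
    intro n i
    have h3 : ∀ s : ℝ, ∑ x ∈ F, (ψ x * (P x).coeff i) *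
        Complex.exp (2 * (Real.pi : ℂ) * Complex.I * ((n - x.2 : ℤ) : ℂ) * (s : ℂ)) = 0 := by
      intro s
      have := congrArg (fun r => Polynomial.coeff r i *
        Complex.exp (2 * (Real.pi : ℂ) * Complex.I * (n : ℂ) * (s : ℂ))) (h1 s)
      simp only [Polynomial.finsetSum_coeff, Polynomial.coeff_C_mul, Polynomial.coeff_zero,
        zero_mul, Finset.sum_mul] at this
      rw [← this]
      refine Finset.sum_congr rfl fun x _ => ?_
      have : Complex.exp (2 * (Real.pi : ℂ) * Complex.I * ((n - x.2 : ℤ) : ℂ) * (s : ℂ)) =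
          eF s x.2 * Complex.exp (2 * (Real.pi : ℂ) * Complex.I * (n : ℂ) * (s : ℂ)) := by
        rw [eF, ← Complex.exp_add]; congr 1; push_cast; ring
      rw [this]; ring
    have h4 : ∫ s in (0 : ℝ)..1, ∑ x ∈ F, (ψ x * (P x).coeff i) *
        Complex.exp (2 * (Real.pi : ℂ) * Complex.I * ((n - x.2 : ℤ) : ℂ) * (s : ℂ)) = 0 := by
      simp_rw [h3]; simp
    rw [intervalIntegral.integral_finsetSum] at h4
    · rw [← h4, Finset.sum_filter]
      refine Finset.sum_congr rfl fun x _ => ?_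
      rw [intervalIntegral.integral_const_mul]
      split_ifs with hx
      · rw [hx]; simp
      · rw [int_exp_zero _ (by omega), mul_zero]
    · intro x _
      apply Continuous.intervalIntegrable
      fun_prop
  by_contra hcon
  push Not at hcon
  obtain ⟨x0, hx0, hψ0⟩ := hcon
  obtain ⟨x, hx, hmax⟩ := Finset.exists_max_image
    ((F.filter (fun x => x.2 = x0.2)).filter (fun x => ψ x ≠ 0)) (fun x => (P x).natDegree)
    ⟨x0, by simp [hx0, hψ0]⟩
  simp only [Finset.mem_filter] at hx hmax
  have := h2 x0.2 (P x).natDegree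
  rw [Finset.sum_eq_single x] at this
  · rcases mul_eq_zero.1 this with h | h
    · exact hx.2 h
    · exact hP0 x hx.1.1 (Polynomial.leadingCoeff_eq_zero.1 h)
  · intro y hy hyx
    rw [Finset.mem_filter] at hy
    by_cases hψ : ψ y = 0
    · simp [hψ]
    · have hle := hmax y ⟨hy, hψ⟩
      have hne : (P y).natDegree ≠ (P x).natDegree := fun he =>
        hyx (hinj y hy.1 x hx.1.1 (hy.2.trans hx.1.2.symm) he)
      rw [Polynomial.coeff_eq_zero_of_natDegree_lt (by omega), mul_zero]
  · intro h; exact absurd (Finset.mem_filter.2 hx.1) h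

lemma exists_psi {ι : Type} [Fintype ι] [DecidableEq ι] {N : ℕ} (hι : Fintype.card ι = N + 1)
    (S : Set ℝ) (w : ℝ → ι → ℂ)
    (hdep : ∀ s : Fin (N + 1) → ℝ, (∀ i, s i ∈ S) →
      ∃ c : Fin (N + 1) → ℂ, (∃ i, c i ≠ 0) ∧ ∀ x, ∑ i, c i * w (s i) x = 0) :
    ∃ ψ : ι → ℂ, ψ ≠ 0 ∧ ∀ s ∈ S, ∑ x, ψ x * w s x = 0 := by
  have hlt : Submodule.span ℂ (w '' S) < ⊤ := by
    rw [lt_top_iff_ne_top]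
    intro htop
    obtain ⟨b, hb, hsp, hli⟩ := exists_linearIndependent ℂ (w '' S)
    rw [htop] at hsp
    let B := Module.Basis.mk hli (by rw [Subtype.range_coe, hsp])
    have : Finite b := Module.Finite.finite_basis B
    have := Fintype.ofFinite b
    have hcard : Fintype.card b = N + 1 := by
      rw [← Module.finrank_eq_card_basis B, Module.finrank_fintype_fun_eq_card, hι]
    let e : Fin (N + 1) ≃ b := (Fintype.equivFinOfCardEq hcard).symm
    have hs : ∀ i, ∃ s ∈ S, w s = (e i : ι → ℂ) := fun i => hb (e i).2
    choose s hsS hsw using hs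
    obtain ⟨c, ⟨i, hi⟩, hc⟩ := hdep s hsS
    have hli2 := hli.comp e e.injective
    rw [Fintype.linearIndependent_iff] at hli2
    refine hi (hli2 c ?_ i)
    funext x
    simp only [Finset.sum_apply, Pi.smul_apply, smul_eq_mul, Function.comp_apply, Pi.zero_apply]
    rw [← hc x]
    refine Finset.sum_congr rfl fun i _ => ?_
    rw [hsw]
  obtain ⟨f, hf, hle⟩ := Submodule.exists_le_ker_of_lt_top _ hlt
  refine ⟨fun x => f (Pi.single x 1), ?_, fun s hs => ?_⟩
  · intro h0
    apply hf
    apply LinearMap.pi_ext'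
    intro x
    ext
    simpa using congrFun h0 x
  · have h1 : f (w s) = 0 := hle (Submodule.subset_span ⟨s, hs, rfl⟩)
    rw [← h1, LinearMap.pi_apply_eq_sum_univ f (w s)]
    refine Finset.sum_congr rfl fun x _ => ?_
    rw [smul_eq_mul, mul_comm]
    congr 1
    refine congrArg f ?_
    funext y
    simp [Pi.single_apply, eq_comm]

lemma dyGrid_mono {i j : ℕ} (hij : i ≤ j) {x : ℝ} (hx : x ∈ dyGrid i) : x ∈ dyGrid j := by
  obtain ⟨n, rfl⟩ := hx
  refine ⟨n * 2 ^ (j - i), ?_⟩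
  obtain ⟨k, rfl⟩ := Nat.exists_eq_add_of_le hij
  simp only [Nat.add_sub_cancel_left, pow_add]
  push_cast
  have : (2 : ℝ) ^ k * (2 : ℝ)⁻¹ ^ k = 1 := by rw [← mul_pow]; norm_num
  linear_combination (-(n : ℝ) * (2 : ℝ)⁻¹ ^ i) * this

lemma dyGrid_dense : Dense (⋃ j, dyGrid j) := by
  rw [Metric.dense_iff]
  intro x r hr
  obtain ⟨j, hj⟩ := exists_pow_lt_of_lt_one hr (by norm_num : (2 : ℝ)⁻¹ < 1)
  refine ⟨⌊x * 2 ^ j⌋ * (2 : ℝ)⁻¹ ^ j, ?_, Set.mem_iUnion.2 ⟨j, _, rfl⟩⟩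
  rw [Metric.mem_ball, Real.dist_eq]
  have hp : (0 : ℝ) < (2 : ℝ)⁻¹ ^ j := by positivity
  have h1 : (2 : ℝ) ^ j * (2 : ℝ)⁻¹ ^ j = 1 := by rw [← mul_pow]; norm_num
  have h2 := Int.floor_le (x * 2 ^ j)
  have h3 := Int.lt_floor_add_one (x * 2 ^ j)
  have e : x = (x * 2 ^ j) * (2 : ℝ)⁻¹ ^ j := by rw [mul_assoc, h1, mul_one]
  rw [abs_lt]
  constructor <;> nlinarith

lemma final_card {N d : ℕ} (D : ℕ → ℤ → ℂ) {q : Polynomial ℂ} (hqd : q.natDegree = d) (hq : q ≠ 0)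
    (hdep : ∀ (j : ℕ) (s : Fin (N + 1) → ℝ), (∀ i, s i ∈ dyGrid j) →
      ∃ c : Fin (N + 1) → ℂ, (∃ i, c i ≠ 0) ∧ ∀ (n : ℤ) (j : ℕ),
        ∑ i, c i * (eF (s i) n * (Rp d D q n j).eval (-(s i : ℂ))) = 0)
    (F : Finset (ℕ × ℤ)) (hF : ∀ x ∈ F, x.1 ≤ d ∧ D x.1 x.2 ≠ 0) : F.card ≠ N + 1 := by
  classical
  intro hcard
  have hex : ∀ x : ℕ × ℤ, ∃ k0, x ∈ F → k0 ≤ x.1 ∧ D k0 x.2 ≠ 0 ∧ (∀ k < k0, D k x.2 = 0) ∧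
      ∀ k1, D k1 x.2 ≠ 0 → (∀ k < k1, D k x.2 = 0) → k1 = k0 := by
    intro x
    by_cases hx : x ∈ F
    · have he : ∃ k, D k x.2 ≠ 0 := ⟨x.1, (hF x hx).2⟩
      refine ⟨Nat.find he, fun _ => ⟨Nat.find_min' he (hF x hx).2, Nat.find_spec he,
        fun k hk => not_not.1 (Nat.find_min he hk), fun k1 h1 h2 => ?_⟩⟩
      symm
      rw [Nat.find_eq_iff]
      exact ⟨h1, fun k hk => not_not.2 (h2 k hk)⟩
    · exact ⟨0, fun h => absurd h hx⟩
  choose k0 hk0 using hex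
  set P : ℕ × ℤ → Polynomial ℂ := fun x => Rp d D q x.2 (x.1 - k0 x) with hP
  have hPd : ∀ x ∈ F, P x ≠ 0 ∧ (P x).natDegree = d - x.1 := by
    intro x hx
    obtain ⟨h1, h2, h3, -⟩ := hk0 x hx
    have h4 := (hF x hx).1
    have := Rp_deg (j := x.1 - k0 x) hqd hq h3 h2 (by omega)
    rwa [Nat.add_sub_cancel' h1] at this
  obtain ⟨ψ, hψ, hψ0⟩ := exists_psi (ι := F) (N := N) (by simpa using hcard) (⋃ j, dyGrid j)
    (fun s x => eF s x.1.2 * (P x.1).eval (-(s : ℂ))) (by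
      intro s hs
      simp only [Set.mem_iUnion] at hs
      choose j hj using hs
      obtain ⟨c, hc, hc2⟩ := hdep (Finset.univ.sup j) s (fun i =>
        dyGrid_mono (Finset.le_sup (Finset.mem_univ i)) (hj i))
      exact ⟨c, hc, fun x => hc2 _ _⟩)
  have hall : ∀ s : ℝ, ∑ x : F, ψ x * (eF s x.1.2 * (P x.1).eval (-(s : ℂ))) = 0 := by
    have hc : Continuous fun s : ℝ => ∑ x : F, ψ x * (eF s x.1.2 * (P x.1).eval (-(s : ℂ))) := by
      refine continuous_finsetSum _ fun x _ => ?_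
      refine continuous_const.mul (Continuous.mul ?_ ?_)
      · unfold eF; fun_prop
      · exact (P x.1).continuous.comp (by fun_prop)
    have := Continuous.ext_on dyGrid_dense hc (continuous_const (y := (0 : ℂ)))
      (fun s hs => hψ0 s hs)
    exact fun s => congrFun this s
  let ψ' : ℕ × ℤ → ℂ := fun x => if h : x ∈ F then ψ ⟨x, h⟩ else 0
  have hz := li_final F P (fun x hx => (hPd x hx).1) (by
    intro x hx y hy h2 hdg
    rw [(hPd x hx).2, (hPd y hy).2] at hdg
    have := (hF x hx).1
    have := (hF y hy).1
    exact Prod.ext (by omega) h2) ψ' (by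
    intro s
    rw [← hall s, ← Finset.sum_coe_sort F]
    refine Finset.sum_congr rfl fun x _ => ?_
    simp [ψ'])
  apply hψ
  funext x
  simpa [ψ'] using hz x.1 x.2

lemma fin_of_card {α : Type} {N : ℕ} {E : Set α}
    (h : ∀ F : Finset α, (∀ x ∈ F, x ∈ E) → F.card ≠ N + 1) : E.Finite ∧ E.ncard ≤ N := by
  classical
  have hfin : E.Finite := by
    by_contra hinf
    obtain ⟨F, hF, hc⟩ := Set.Infinite.exists_subset_card_eq hinf (N + 1)
    exact h F (fun x hx => hF hx) hc
  refine ⟨hfin, ?_⟩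
  by_contra hlt
  push Not at hlt
  rw [Set.ncard_eq_toFinset_card _ hfin] at hlt
  obtain ⟨F, hF, hc⟩ := Finset.exists_subset_card_eq (Nat.succ_le_of_lt hlt)
  exact h F (fun x hx => by simpa using hF hx) hc


/-- Let `φ̂(z) = Π_{j=1}^∞ a_j(2^{−j}z)` with trigonometric polynomials `a_j` of
degree ≤ N, `a_j(0) = 1`, `sup_ℝ|a_j| ≤ C`, `φ` continuous integrable compactly supported with
linearly independent integer shifts. If the analytic function
`g(t) = e^{λt} Σ_{k=0}^d p_k(t)·ω_k(t)` (with `d ≤ N`, `ω_k` 1-periodic analytic, `ω_d ≢ 0`,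
`deg p_k = k`) belongs to `V_φ`, then the sequences `{φ̂^{(k)}(−iλ/(2π)+ℓ) : ℓ ∈ ℤ}`,
`k = 0,…,d`, contain all together at most `N` nonzero elements. -/
theorem stmt_17 (N : ℕ) (C : ℝ) (hC : 0 < C)
    (coef : ℕ → ℕ → ℂ) (A : ℕ → ℂ → ℂ)
    (hA : ∀ j : ℕ, ∀ y : ℂ, A j y =
      ∑ m ∈ Finset.range (N + 1), coef j m * Complex.exp (-(2 * (Real.pi : ℂ) * Complex.I * (m : ℂ) * y)))
    (hA0 : ∀ j : ℕ, A j 0 = 1)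
    (hAbd : ∀ j : ℕ, ∀ y : ℝ, ‖A j ((y : ℂ))‖ ≤ C)
    (φ : ℝ → ℂ) (hcont : Continuous φ) (hint : Integrable φ) (hsupp : HasCompactSupport φ)
    (hli : ∀ b : ℤ → ℂ, (∀ t : ℝ, ∑' ℓ : ℤ, b ℓ * φ (t - (ℓ : ℝ)) = 0) → ∀ ℓ, b ℓ = 0)
    (hprod : ∀ z : ℂ, Filter.Tendsto
      (fun J : ℕ => ∏ j ∈ Finset.Icc 1 J, A j ((2 : ℂ) ^ (-(j : ℤ)) * z))
      Filter.atTop (nhds (fourierExt φ z)))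
    (lam : ℂ) (d : ℕ) (hd : d ≤ N) (ω : ℕ → ℝ → ℂ)
    (hper : ∀ k ≤ d, ∀ t : ℝ, ω k (t + 1) = ω k t)
    (hana : ∀ k ≤ d, ∀ x : ℝ, AnalyticAt ℝ (ω k) x)
    (hωd : ∃ t : ℝ, ω d t ≠ 0)
    (p : ℕ → Polynomial ℂ) (hdeg : ∀ k ≤ d, (p k).degree = k)
    (a : ℤ → ℂ)
    (hg : ∀ t : ℝ,
      Complex.exp (lam * (t : ℂ)) * ∑ k ∈ Finset.range (d + 1), (p k).eval (t : ℂ) * ω k t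
        = ∑' ℓ : ℤ, a ℓ * φ (t - (ℓ : ℝ))) :
    ({x : ℕ × ℤ | x.1 ≤ d ∧ iteratedDeriv x.1 (fourierExt φ)
        (-(Complex.I * lam) / (2 * (Real.pi : ℂ)) + (x.2 : ℂ)) ≠ 0}).Finite ∧
      ({x : ℕ × ℤ | x.1 ≤ d ∧ iteratedDeriv x.1 (fourierExt φ)
        (-(Complex.I * lam) / (2 * (Real.pi : ℂ)) + (x.2 : ℂ)) ≠ 0}).ncard ≤ N := by
  have hC1 : 1 ≤ C := by
    have := hAbd 0 0
    rw [Complex.ofReal_zero, hA0] at this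
    simpa using this
  have h00 : ∀ i, ∑ m ∈ Finset.range (N + 1), coef i m = 1 := by
    intro i
    have := hA0 i
    rw [hA] at this
    simpa using this
  have hbd0 : ∀ i, ∀ y : ℝ, ‖∑ m ∈ Finset.range (N + 1),
      coef i m * Complex.exp (-(2 * (Real.pi : ℂ) * Complex.I * (m : ℂ) * (y : ℂ)))‖ ≤ C := by
    intro i y
    rw [← hA]; exact hAbd i y
  have hcast : ∀ (i : ℕ) (y : ℝ), (2 : ℂ) ^ (-(i : ℤ)) * (y : ℂ) =
      (((2 : ℝ)⁻¹ ^ i * y : ℝ) : ℂ) := by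
    intro i y
    rw [zpow_neg, zpow_natCast]
    push_cast
    rw [inv_pow]
  set mk : ℕ → ℝ → ℂ := fun i y => A i ((2 : ℂ) ^ (-(i : ℤ)) * (y : ℂ)) with hmkd
  have hmk : ∀ i, mk i ∈ TS (maskSet N i) := by
    intro i
    have e : mk i = ∑ m ∈ Finset.range (N + 1), coef i m • eF ((m : ℝ) * (2 : ℝ)⁻¹ ^ i) := by
      funext y
      rw [hmkd]
      simp only [hcast, hA, Finset.sum_apply, Pi.smul_apply, smul_eq_mul, eF]
      refine Finset.sum_congr rfl fun m _ => ?_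
      congr 2; push_cast; ring
    rw [e]
    refine Submodule.sum_mem _ fun m hm => Submodule.smul_mem _ _ (eF_mem ⟨m, ?_, rfl⟩)
    have := Finset.mem_range.1 hm
    omega
  have hL : (0 : ℝ) ≤ (N + 1) * (C * (2 * Real.pi * N)) := by positivity
  obtain ⟨K, r, hK⟩ := prod_bd C _ hC1 hL
  have hbd : ∀ J y, ‖(∏ i ∈ Finset.Icc 1 J, mk i) y‖ ≤ K * (1 + ‖y‖ ^ r) := by
    intro J y
    rw [Finset.prod_apply, norm_prod]
    refine hK (fun i => ‖mk i y‖) ‖y‖ (norm_nonneg _) (fun i => norm_nonneg _) (fun i => ?_)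
      (fun i => ?_) J
    · simp only [hmkd, hcast]; exact hAbd i _
    · simp only [hmkd, hcast, hA]
      refine (trig_lip (coef i) (hbd0 i) (h00 i) _).trans_eq ?_
      rw [abs_mul, abs_of_nonneg (by positivity : (0 : ℝ) ≤ (2 : ℝ)⁻¹ ^ i), Real.norm_eq_abs]
  have hlim : ∀ y, Filter.Tendsto (fun J => (∏ i ∈ Finset.Icc 1 J, mk i) y) Filter.atTop
      (nhds (∫ x, eF y x * φ x)) := by
    intro y
    have h1 := hprod (y : ℂ)
    have h2 : fourierExt φ (y : ℂ) = ∫ x, eF y x * φ x := by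
      rw [fourierExt]
      congr 1; funext x
      rw [eF, mul_comm]
      congr 2; ring
    rw [h2] at h1
    simpa only [Finset.prod_apply] using h1
  set g : ℝ → ℂ := fun t => Complex.exp (lam * (t : ℂ)) *
    ∑ k ∈ Finset.range (d + 1), (p k).eval (t : ℂ) * ω k t with hgd
  have hofR : ∀ x : ℝ, AnalyticAt ℝ (fun t : ℝ => (t : ℂ)) x := fun x =>
    Complex.ofRealCLM.analyticAt x
  have hgan : AnalyticOnNhd ℝ g Set.univ := by
    intro x _
    refine AnalyticAt.mul ?_ ?_
    · have h1 : AnalyticAt ℝ Complex.exp (lam * (x : ℂ)) :=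
        (analyticAt_cexp).restrictScalars
      exact h1.comp (f := fun t : ℝ => lam * (t : ℂ)) (analyticAt_const.mul (hofR x))
    · refine Finset.analyticAt_fun_sum _ fun k hk => ?_
      refine AnalyticAt.mul ?_ (hana k (by have := Finset.mem_range.1 hk; omega) x)
      have h1 : AnalyticAt ℝ (fun z : ℂ => (p k).eval z) (x : ℂ) :=
        (AnalyticOnNhd.eval_polynomial (𝕜 := ℂ) (p k) (x : ℂ) (Set.mem_univ _)).restrictScalars
      exact h1.comp (f := fun t : ℝ => (t : ℂ)) (hofR x)
  obtain ⟨q, hq, hqd, haq⟩ := poly_seq hsupp hli hper hωd hdeg hg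
  refine fin_of_card fun F hF => ?_
  refine final_card (fun k n => iteratedDeriv k (fourierExt φ)
        (-(Complex.I * lam) / (2 * (Real.pi : ℂ)) + (n : ℂ))) hqd hq ?_ F (fun x hx => hF x hx)
  intro j s hs
  obtain ⟨c, ⟨i, hi⟩, hc⟩ := dep_main hmk hbd hcont hint hsupp hlim hgan (a := a) hg j s hs
  exact ⟨fun i => c i * Complex.exp (-(lam * s i)),
    ⟨i, mul_ne_zero hi (Complex.exp_ne_zero _)⟩,
    fun n j => dep_fourier hcont hsupp hqd.le haq hg c s hc n j⟩
end

section
/- Let N ∈ ℕ and C > 0, let a(y) = Σ_{m=0}^N a_m·e^{−2πi m y} be one fixed trigonometric polynomial of degree at most N with a(0) = 1 and sup_{y∈ℝ}|a(y)| ≤ C, and let φ : ℝ → ℂ be continuous, integrable and compactly supported with linearly independent integer shifts and with φ̂(z) = Π_{j=1}^∞ a(2^{−j} z) for all z ∈ ℂ (pointwise limit of partial products). Let λ ∈ ℂ, d ∈ ℕ₀ with d ≤ N, let ω_0, …, ω_d : ℝ → ℂ be 1-periodic analytic functions with ω_d not identically zero, and let p_0, …, p_d be polynomials with deg(p_k)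 = k. If the analytic function g(t) = e^{λt} Σ_{k=0}^d p_k(t)·ω_k(t) belongs to V_φ, then λ ∈ 2πi·ℤ and each function t ↦ e^{λt}·ω_k(t), k = 0, …, d, is constant; in particular g is an algebraic polynomial of degree d. -/
open MeasureTheory

lemma aux_alg (lam : ℂ) (d : ℕ) (ω : ℕ → ℝ → ℂ)
    (hper : ∀ k ≤ d, ∀ t : ℝ, ω k (t + 1) = ω k t)
    (hωd : ∃ t : ℝ, ω d t ≠ 0)
    (p : ℕ → Polynomial ℂ) (hdeg : ∀ k ≤ d, (p k).degree = k)
    (P : Polynomial ℂ)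
    (hP : ∀ t : ℝ,
      Complex.exp (lam * (t : ℂ)) * ∑ k ∈ Finset.range (d + 1), (p k).eval (t : ℂ) * ω k t
        = P.eval (t : ℂ)) :
    (∃ m : ℤ, lam = 2 * Real.pi * Complex.I * m) ∧
    (∀ k ≤ d, ∃ cst : ℂ, ∀ t : ℝ, Complex.exp (lam * (t : ℂ)) * ω k t = cst) ∧
    P.degree = d := by
  classical
  set c : ℕ → ℝ → ℂ := fun k t => Complex.exp (lam * (t : ℂ)) * ω k t with hc
  set ρ := Complex.exp lam with hρ
  have hρ0 : ρ ≠ 0 := Complex.exp_ne_zero _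
  have hpern : ∀ k ≤ d, ∀ t : ℝ, ∀ n : ℕ, c k (t + n) = ρ ^ n * c k t := by
    intro k hk t n
    have h1 : ω k (t + n) = ω k t := by
      induction n with
      | zero => simp
      | succ n ih => rw [← ih, ← hper k hk (t + n)]; push_cast; ring_nf
    simp only [hc, h1, hρ, ← Complex.exp_nat_mul]
    rw [← mul_assoc, ← Complex.exp_add]
    push_cast; ring_nf
  let R : ℝ → Polynomial ℂ := fun t => ∑ k ∈ Finset.range (d + 1), Polynomial.C (c k t) * p k
  have hR : ∀ t : ℝ, ∀ n : ℕ, P.eval ((t : ℂ) + n) = ρ ^ n * (R t).eval ((t : ℂ) + n) := by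
    intro t n
    have := hP (t + n)
    push_cast at this
    rw [← this]
    simp only [R, Polynomial.eval_finsetSum, Polynomial.eval_mul, Polynomial.eval_C, Finset.mul_sum]
    refine Finset.sum_congr rfl fun k hk => ?_
    have := hpern k (by simpa [Nat.lt_succ_iff] using hk) t n
    simp only [hc] at this
    push_cast at this
    simp only [hc]
    linear_combination (Polynomial.eval ((t:ℂ) + n) (p k)) * this
  have hinf : ∀ t : ℝ, ∀ Q1 Q2 : Polynomial ℂ,
      (∀ n : ℕ, Q1.eval ((t : ℂ) + n) = Q2.eval ((t : ℂ) + n)) → Q1 = Q2 := by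
    intro t Q1 Q2 h
    apply Polynomial.eq_of_infinite_eval_eq
    refine Set.Infinite.mono ?_ (Set.infinite_range_of_injective
      (f := fun n : ℕ => (t : ℂ) + n) ?_)
    · rintro _ ⟨n, rfl⟩; exact h n
    · intro a b hab; simpa using hab
  -- linear independence
  have hli : ∀ e : ℕ → ℂ, (∑ k ∈ Finset.range (d + 1), Polynomial.C (e k) * p k = 0) →
      ∀ k ≤ d, e k = 0 := by
    have key : ∀ D ≤ d, ∀ e : ℕ → ℂ, (∑ k ∈ Finset.range (D + 1), Polynomial.C (e k) * p k = 0) →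
      ∀ k ≤ D, e k = 0 := by
      intro D
      induction D with
      | zero =>
        intro hD e he k hk
        have h0 : p 0 ≠ 0 := by
          intro h; have := hdeg 0 hD; simp [h] at this
        obtain rfl : k = 0 := by omega
        simpa [h0] using he
      | succ D ih =>
        intro hD e he k hk
        have htop : e (D + 1) = 0 := by
          by_contra hne
          rw [Finset.sum_range_succ] at he
          have h1 : (Polynomial.C (e (D+1)) * p (D+1)).degree = ((D + 1 : ℕ) : WithBot ℕ) := by
            rw [Polynomial.degree_C_mul hne, hdeg _ hD]
          have h2 : (∑ k ∈ Finset.range (D + 1), Polynomial.C (e k) * p k).degree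
              < ((D + 1 : ℕ) : WithBot ℕ) := by
            rw [Polynomial.degree_lt_iff_coeff_zero]
            intro m hm
            rw [Polynomial.finsetSum_coeff]
            refine Finset.sum_eq_zero fun j hj => ?_
            rw [Polynomial.coeff_C_mul, Polynomial.coeff_eq_zero_of_degree_lt, mul_zero]
            have : j < D + 1 := by simpa using hj
            rw [hdeg j (by omega)]
            exact_mod_cast lt_of_lt_of_le this hm
          rw [eq_neg_of_add_eq_zero_left he, Polynomial.degree_neg, h1] at h2
          exact lt_irrefl _ h2
        rcases Nat.lt_or_ge k (D+1) with h | h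
        · refine ih (by omega) e ?_ k (by omega)
          rw [Finset.sum_range_succ, htop] at he
          simpa using he
        · obtain rfl : k = D + 1 := by omega
          exact htop
    exact key d le_rfl
  obtain ⟨t0, ht0⟩ := hωd
  have hc0 : c d t0 ≠ 0 := mul_ne_zero (Complex.exp_ne_zero _) ht0
  have hRdeg : (R t0).degree = d := by
    have h1 : (Polynomial.C (c d t0) * p d).degree = (d : WithBot ℕ) := by
      rw [Polynomial.degree_C_mul hc0, hdeg _ le_rfl]
    simp only [R]
    rw [Finset.sum_range_succ, Polynomial.degree_add_eq_right_of_degree_lt, h1]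
    rw [h1, Polynomial.degree_lt_iff_coeff_zero]
    intro m hm
    rw [Polynomial.finsetSum_coeff]
    refine Finset.sum_eq_zero fun j hj => ?_
    rw [Polynomial.coeff_C_mul, Polynomial.coeff_eq_zero_of_degree_lt, mul_zero]
    have : j < d := by simpa using hj
    rw [hdeg j (by omega)]
    exact_mod_cast lt_of_lt_of_le this hm
  have hR0 : R t0 ≠ 0 := by
    intro h; rw [h] at hRdeg; simp at hRdeg
  have hP0 : P ≠ 0 := by
    intro h
    apply hR0
    apply hinf t0
    intro n
    have := hR t0 n
    rw [h] at this
    simp [hρ0] at this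
    simpa using this
  have hρ1 : ρ = 1 := by
    have hid : P.comp (Polynomial.X + Polynomial.C 1) * R t0
        = Polynomial.C ρ * (P * (R t0).comp (Polynomial.X + Polynomial.C 1)) := by
      apply hinf t0
      intro n
      simp only [Polynomial.eval_mul, Polynomial.eval_comp, Polynomial.eval_add,
        Polynomial.eval_X, Polynomial.eval_C]
      have h1 := hR t0 n
      have h2 := hR t0 (n + 1)
      push_cast at h2
      rw [← add_assoc] at h2
      rw [h1, h2]; ring
    have hnd : (Polynomial.X + Polynomial.C (1 : ℂ)).natDegree ≠ 0 := by
      rw [Polynomial.natDegree_X_add_C]; exact one_ne_zero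
    have := congrArg Polynomial.leadingCoeff hid
    simp only [Polynomial.leadingCoeff_mul, Polynomial.leadingCoeff_C] at this
    rw [Polynomial.leadingCoeff_comp hnd, Polynomial.leadingCoeff_comp hnd] at this
    simp only [Polynomial.leadingCoeff_X_add_C, one_pow, mul_one] at this
    have h3 : P.leadingCoeff * (R t0).leadingCoeff ≠ 0 :=
      mul_ne_zero (by simpa using hP0) (by simpa using hR0)
    have h4 : (ρ - 1) * (P.leadingCoeff * (R t0).leadingCoeff) = 0 := by
      linear_combination -this
    rcases mul_eq_zero.1 h4 with h | h
    · exact sub_eq_zero.1 h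
    · exact absurd h h3
  have hPR : ∀ t, P = R t := by
    intro t
    apply hinf t
    intro n
    rw [hR t n, hρ1]; simp
  refine ⟨?_, ?_, ?_⟩
  · obtain ⟨n, hn⟩ := Complex.exp_eq_one_iff.1 hρ1
    exact ⟨n, by rw [hn]; ring⟩
  · intro k hk
    refine ⟨c k 0, fun t => ?_⟩
    have h := hli (fun k => c k t - c k 0) ?_ k hk
    · exact sub_eq_zero.1 h
    · have := (hPR t).symm.trans (hPR 0)
      simp only [R] at this
      simp only [map_sub, sub_mul, Finset.sum_sub_distrib, this, sub_self]
  · rw [hPR t0, hRdeg]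

lemma aux_poly (f : ℝ → ℂ) (hf : ∀ x, AnalyticAt ℝ f x) (M : ℕ) (q : ℕ → ℂ)
    (hq : ∃ i ≤ M, q i ≠ 0)
    (hrel : ∀ t : ℝ, |t| ≤ 1 → ∑ i ∈ Finset.range (M + 1), q i * f ((2⁻¹ : ℝ) ^ i * t) = 0) :
    ∃ P : Polynomial ℂ, ∀ t : ℝ, f t = P.eval (t : ℂ) := by
  obtain ⟨s, hs⟩ := hf 0
  have hs' := hasFPowerSeriesAt_iff.1 hs
  simp only [zero_add] at hs'
  set c := s.coeff with hc
  let Q : Polynomial ℂ := ∑ i ∈ Finset.range (M + 1), Polynomial.C (q i) * Polynomial.X ^ i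
  have hQ : Q ≠ 0 := by
    obtain ⟨i, hi, hne⟩ := hq
    intro h
    apply hne
    have := congrArg (fun Q => Polynomial.coeff Q i) h
    simp [Q, Polynomial.finsetSum_coeff, Polynomial.coeff_X_pow] at this
    exact this (by omega)
  have hz : ∀ n, Q.eval ((2⁻¹ : ℂ) ^ n) * c n = 0 := by
    let S : FormalMultilinearSeries ℝ ℝ ℂ := fun n =>
      ContinuousMultilinearMap.mkPiRing ℝ (Fin n) (Q.eval ((2⁻¹ : ℂ) ^ n) * c n)
    have hScoef : ∀ n, S.coeff n = Q.eval ((2⁻¹ : ℂ) ^ n) * c n := by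
      intro n
      simp only [FormalMultilinearSeries.coeff, S, ContinuousMultilinearMap.mkPiRing_apply,
        Pi.one_apply, Finset.prod_const_one, one_smul]
    have hser : HasFPowerSeriesAt (fun _ : ℝ => (0 : ℂ))
      S 0 := by
      apply hasFPowerSeriesAt_iff.2
      obtain ⟨ε, hε, hball⟩ := Metric.eventually_nhds_iff.1 hs'
      refine Metric.eventually_nhds_iff.2 ⟨min ε 1, by positivity, fun z hz => ?_⟩
      simp only [dist_zero_right, Real.norm_eq_abs, lt_min_iff] at hz hball
      have h1 : ∀ i ∈ Finset.range (M + 1), HasSum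
          (fun n => q i * (((2⁻¹ : ℝ) ^ i * z) ^ n • c n)) (q i * f ((2⁻¹ : ℝ) ^ i * z)) := by
        intro i _
        refine (hball ?_).mul_left (q i)
        rw [abs_mul]
        have : |(2⁻¹ : ℝ) ^ i| ≤ 1 := by
          rw [abs_of_pos (by positivity)]
          exact pow_le_one₀ (by norm_num) (by norm_num)
        calc _ ≤ 1 * |z| := by gcongr
          _ < ε := by linarith [hz.1]
      have h2 := hasSum_sum h1
      rw [hrel z hz.2.le] at h2
      have h5 : (fun n => z ^ n • S.coeff n) =
          fun n => ∑ i ∈ Finset.range (M + 1), q i * (((2⁻¹ : ℝ) ^ i * z) ^ n • c n) := ?_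
      · exact h5 ▸ h2
      funext n
      simp only [hScoef, Q, Polynomial.eval_finsetSum,
        Polynomial.eval_mul, Polynomial.eval_C, Polynomial.eval_pow, Polynomial.eval_X]
      rw [Finset.sum_mul, Finset.smul_sum]
      refine Finset.sum_congr rfl fun i _ => ?_
      simp only [Complex.real_smul]
      push_cast
      rw [mul_pow, ← pow_mul, ← pow_mul, mul_comm i n]
      ring
    intro n
    have := hser.eq_zero
    have h3 := congrArg (fun p : FormalMultilinearSeries ℝ ℝ ℂ => p.coeff n) this
    simp only [hScoef] at h3
    rw [h3]; simp [FormalMultilinearSeries.coeff]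
  have hfin : {n : ℕ | Q.eval ((2⁻¹ : ℂ) ^ n) = 0}.Finite := by
    have h1 : (Q.roots.toFinset : Set ℂ).Finite := Finset.finite_toSet _
    refine (Set.Finite.preimage (f := fun n : ℕ => (2⁻¹ : ℂ) ^ n) ?_ h1).subset ?_
    · intro a _ b _ hab
      have h2 : (2⁻¹ : ℝ) ^ a = (2⁻¹ : ℝ) ^ b := by
        simp only at hab
        have h4 : (((2⁻¹ : ℝ) ^ a : ℝ) : ℂ) = (((2⁻¹ : ℝ) ^ b : ℝ) : ℂ) := by
          push_cast; exact hab
        exact Complex.ofReal_injective h4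
      exact pow_right_injective₀ (by norm_num) (by norm_num) h2
    · intro n hn
      simpa [hQ] using hn
  obtain ⟨K, hK⟩ := hfin.bddAbove
  have hcz : ∀ n, K < n → c n = 0 := by
    intro n hn
    rcases mul_eq_zero.1 (hz n) with h | h
    · exact absurd (hK h) (by omega)
    · exact h
  let P : Polynomial ℂ := ∑ n ∈ Finset.range (K + 1), Polynomial.C (c n) * Polynomial.X ^ n
  refine ⟨P, fun t => ?_⟩
  have hPe : ∀ t : ℝ, P.eval (t : ℂ) = ∑ n ∈ Finset.range (K + 1), t ^ n • c n := by
    intro t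
    simp only [P, Polynomial.eval_finsetSum, Polynomial.eval_mul, Polynomial.eval_C,
      Polynomial.eval_pow, Polynomial.eval_X, Complex.real_smul]
    refine Finset.sum_congr rfl fun n _ => ?_
    push_cast; ring
  have hPan : AnalyticOnNhd ℝ (fun t : ℝ => P.eval (t : ℂ)) Set.univ := by
    intro x _
    simp_rw [hPe]
    fun_prop
  have hfan : AnalyticOnNhd ℝ f Set.univ := fun x _ => hf x
  refine congrFun (hfan.eq_of_eventuallyEq hPan (z₀ := 0) ?_) t
  filter_upwards [hs'] with z hz
  rw [hPe]
  refine hz.unique (hasSum_sum_of_ne_finset_zero fun n hn => ?_)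
  rw [hcz n (by simpa using hn), smul_zero]

lemma aux_refine (N : ℕ) (coef : ℕ → ℂ) (A : ℂ → ℂ)
    (hA : ∀ y : ℂ, A y =
      ∑ m ∈ Finset.range (N + 1), coef m * Complex.exp (-(2 * (Real.pi : ℂ) * Complex.I * (m : ℂ) * y)))
    (φ : ℝ → ℂ) (hcont : Continuous φ) (hint : Integrable φ) 
    (hprod : ∀ z : ℂ, Filter.Tendsto
      (fun J : ℕ => ∏ j ∈ Finset.Icc 1 J, A ((2 : ℂ) ^ (-(j : ℤ)) * z))
      Filter.atTop (nhds (fourierExt φ z))) (t : ℝ) :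
    φ t = ∑ m ∈ Finset.range (N + 1), 2 * coef m * φ (2 * t - m) := by
  have hrel : ∀ z : ℂ, fourierExt φ z = A (z / 2) * fourierExt φ (z / 2) := by
    intro z
    have h1 := (hprod z).comp (Filter.tendsto_add_atTop_nat 1)
    have h2 := (hprod (z / 2)).const_mul (A (z / 2))
    refine tendsto_nhds_unique h1 (h2.congr fun J => ?_)
    simp only [Function.comp]
    induction J with
    | zero => simp [div_eq_inv_mul]
    | succ J ih =>
      rw [Finset.prod_Icc_succ_top (by omega), ← mul_assoc, ih,
        Finset.prod_Icc_succ_top (b := J + 1) (by omega)]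
      congr 2
      rw [zpow_neg, zpow_neg, zpow_natCast, zpow_natCast, pow_succ _ (J + 1)]
      field_simp
  let ψ : ℝ → ℂ := fun t => φ t - ∑ m ∈ Finset.range (N + 1), 2 * coef m * φ (2 * t - m)
  have hi : ∀ m : ℕ, Integrable (fun t : ℝ => φ (2 * t - m)) := by
    intro m
    exact (hint.comp_sub_right (m : ℝ)).comp_mul_left' two_ne_zero
  have hψi : Integrable ψ := by
    refine hint.sub (integrable_finsetSum _ fun m _ => (hi m).const_mul _)
  have hψc : Continuous ψ := by fun_prop
  have hexp : ∀ {f : ℝ → ℂ}, Integrable f → ∀ w : ℝ, Integrable (fun x : ℝ =>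
      f x * Complex.exp (-(2 * (Real.pi : ℂ) * Complex.I * (x : ℂ) * w))) := by
    intro f hf w
    refine hf.mul_bdd (c := 1) (Continuous.aestronglyMeasurable (by fun_prop)) ?_
    refine Filter.Eventually.of_forall fun x => ?_
    rw [show -(2 * (Real.pi : ℂ) * Complex.I * (x : ℂ) * w)
      = ((-(2 * Real.pi * x * w) : ℝ) : ℂ) * Complex.I by push_cast; ring,
      Complex.norm_exp_ofReal_mul_I]
  have hshift : ∀ m : ℕ, ∀ w : ℝ, fourierExt (fun t => φ (2 * t - m)) w
      = 2⁻¹ * Complex.exp (-(2 * (Real.pi : ℂ) * Complex.I * (m : ℂ) * (w / 2)))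
        * fourierExt φ (w / 2) := by
    intro m w
    unfold fourierExt
    let G : ℝ → ℂ := fun y => φ (y - m) *
        Complex.exp (-(2 * (Real.pi : ℂ) * Complex.I * (y : ℂ) * (w / 2)))
    have e1 : (fun x : ℝ => φ (2 * x - m) *
        Complex.exp (-(2 * (Real.pi : ℂ) * Complex.I * (x : ℂ) * w))) = fun x => G (2 * x) := by
      ext x; simp only [G]; push_cast; congr 3; ring
    rw [e1, Measure.integral_comp_mul_left G 2, ← integral_add_right_eq_self G (m : ℝ)]
    have e2 : (fun x : ℝ => G (x + m)) = fun x : ℝ =>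
        Complex.exp (-(2 * (Real.pi : ℂ) * Complex.I * (m : ℂ) * (w / 2))) *
        (φ x * Complex.exp (-(2 * (Real.pi : ℂ) * Complex.I * (x : ℂ) * (w / 2)))) := by
      ext x; simp only [G, add_sub_cancel_right]
      rw [mul_left_comm, ← Complex.exp_add]
      push_cast; congr 2; ring
    rw [e2, integral_const_mul, Complex.real_smul, abs_of_pos (by norm_num)]
    push_cast; ring
  have hF : ∀ w : ℝ, fourierExt ψ w = 0 := by
    intro w
    have : fourierExt ψ w = fourierExt φ w - ∑ m ∈ Finset.range (N + 1),
        2 * coef m * fourierExt (fun t => φ (2 * t - m)) w := by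
      simp only [fourierExt, ψ, sub_mul, Finset.sum_mul]
      rw [integral_sub (hexp hint w), integral_finsetSum]
      · congr 1
        refine Finset.sum_congr rfl fun m _ => ?_
        rw [← integral_const_mul]
        simp only [mul_assoc]
      · intro m _
        simpa only [mul_assoc] using (hexp (hi m) w).const_mul (2 * coef m)
      · refine integrable_finsetSum _ fun m _ => ?_
        simpa only [mul_assoc] using (hexp (hi m) w).const_mul (2 * coef m)
    rw [this, hrel w, hA, Finset.sum_mul, sub_eq_zero]
    refine Finset.sum_congr rfl fun m _ => ?_
    rw [hshift]; ring
  have hFz : FourierTransform.fourier ψ = 0 := by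
    ext w
    rw [Real.fourier_real_eq_integral_exp_smul]
    refine Eq.trans ?_ (hF w)
    unfold fourierExt
    congr 1; ext x
    rw [smul_eq_mul, mul_comm]
    congr 2; push_cast; ring
  have := hψc.fourierInv_fourier_eq hψi (by rw [hFz]; exact integrable_zero _ _ _)
  rw [hFz] at this
  have h0 : ψ t = 0 := by
    rw [← this, Real.fourierInv_eq]; simp
  exact sub_eq_zero.1 h0

lemma aux_finite (φ : ℝ → ℂ) (hsupp : HasCompactSupport φ) :
    ∃ L : ℕ, ∀ x : ℝ, (L : ℝ) ≤ |x| → φ x = 0 := by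
  obtain ⟨R, hR⟩ := hsupp.isCompact.isBounded.exists_norm_le
  obtain ⟨L, hL⟩ := exists_nat_gt R
  refine ⟨L, fun x hx => ?_⟩
  by_contra h
  have := hR x (subset_tsupport φ h)
  rw [Real.norm_eq_abs] at this
  linarith

lemma aux_supp (φ : ℝ → ℂ) (L : ℕ) (hL : ∀ x : ℝ, (L : ℝ) ≤ |x| → φ x = 0) (t : ℝ)
    (K : ℕ) (hK : |t| ≤ K) (ℓ : ℤ) (hℓ : ℓ ∉ Finset.Icc (-((L + K : ℕ) : ℤ)) ((L + K : ℕ) : ℤ)) :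
    φ (t - ℓ) = 0 := by
  apply hL
  rw [Finset.mem_Icc, ← abs_le, not_le] at hℓ
  have h1 : ((L + K : ℕ) : ℝ) < |(ℓ : ℝ)| := by exact_mod_cast hℓ
  have h2 := abs_sub_abs_le_abs_sub (ℓ : ℝ) t
  rw [abs_sub_comm] at h2
  push_cast at h1
  linarith

lemma aux_summable (φ : ℝ → ℂ) (hsupp : HasCompactSupport φ) (t : ℝ) (b : ℤ → ℂ) :
    Summable (fun ℓ : ℤ => b ℓ * φ (t - ℓ)) := by
  obtain ⟨L, hL⟩ := aux_finite φ hsupp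
  obtain ⟨K, hK⟩ := exists_nat_ge |t|
  refine summable_of_ne_finset_zero (s := Finset.Icc (-((L + K : ℕ) : ℤ)) ((L + K : ℕ) : ℤ)) ?_
  intro ℓ hℓ
  rw [aux_supp φ L hL t K hK ℓ hℓ, mul_zero]

lemma aux_half (N : ℕ) (e : ℕ → ℂ) (φ : ℝ → ℂ) (hsupp : HasCompactSupport φ)
    (href : ∀ t : ℝ, φ t = ∑ m ∈ Finset.range (N + 1), e m * φ (2 * t - m))
    (a : ℤ → ℂ) : ∃ b : ℤ → ℂ, ∀ t : ℝ,
      ∑' ℓ : ℤ, a ℓ * φ (2⁻¹ * t - ℓ) = ∑' ℓ : ℤ, b ℓ * φ (t - ℓ) := by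
  classical
  let B : ℕ → ℤ → ℂ := fun m n => if 2 ∣ n - m then a ((n - m) / 2) else 0
  refine ⟨fun n => ∑ m ∈ Finset.range (N + 1), e m * B m n, fun t => ?_⟩
  have hinj : ∀ m : ℕ, Function.Injective (fun ℓ : ℤ => 2 * ℓ + (m : ℤ)) := by
    intro m x y h; simp only at h; omega
  have hB : ∀ (m : ℕ) (ℓ : ℤ), B m (2 * ℓ + m) = a ℓ := by
    intro m ℓ
    simp [B]
  have hsub : ∀ (m : ℕ), Function.support (fun n : ℤ => B m n * φ (t - n)) ⊆
      Set.range (fun ℓ : ℤ => 2 * ℓ + (m : ℤ)) := by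
    intro m n hn
    have h1 : B m n ≠ 0 := left_ne_zero_of_mul hn
    have h2 : 2 ∣ n - (m : ℤ) := by
      by_contra h
      exact h1 (by simp [B, h])
    obtain ⟨k, hk⟩ := h2
    exact ⟨k, by simp only; omega⟩
  have hm : ∀ m : ℕ, HasSum (fun ℓ : ℤ => a ℓ * φ (t - 2 * ℓ - m)) (∑' n : ℤ, B m n * φ (t - n)) := by
    intro m
    have h := (aux_summable φ hsupp t (B m)).hasSum
    rw [← (hinj m).hasSum_iff (fun n hn => Function.notMem_support.1 fun h' => hn (hsub m h'))] at h
    convert h using 1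
    ext ℓ
    simp only [Function.comp, hB]
    push_cast
    congr 2; ring
  have hl : HasSum (fun ℓ : ℤ => a ℓ * φ (2⁻¹ * t - ℓ))
      (∑ m ∈ Finset.range (N + 1), e m * ∑' n : ℤ, B m n * φ (t - n)) := by
    have h0 := hasSum_sum (fun m (_ : m ∈ Finset.range (N + 1)) => (hm m).mul_left (e m))
    refine Eq.mp (congrArg (fun F => HasSum F _) (funext fun ℓ => Eq.symm ?_)) h0
    rw [href, Finset.mul_sum]
    refine Finset.sum_congr rfl fun m _ => ?_
    rw [mul_left_comm]
    congr 3; ring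
  have hr : HasSum (fun n : ℤ => (∑ m ∈ Finset.range (N + 1), e m * B m n) * φ (t - n))
      (∑ m ∈ Finset.range (N + 1), e m * ∑' n : ℤ, B m n * φ (t - n)) := by
    have h0 := hasSum_sum (fun m (_ : m ∈ Finset.range (N + 1)) =>
      ((aux_summable φ hsupp t (B m)).hasSum).mul_left (e m))
    refine Eq.mp (congrArg (fun F => HasSum F _) (funext fun n => Eq.symm ?_)) h0
    rw [Finset.sum_mul]
    simp only [mul_assoc]
  rw [hl.tsum_eq, hr.tsum_eq]

lemma aux_rel (N : ℕ) (e : ℕ → ℂ) (φ : ℝ → ℂ) (hsupp : HasCompactSupport φ)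
    (href : ∀ t : ℝ, φ t = ∑ m ∈ Finset.range (N + 1), e m * φ (2 * t - m))
    (f : ℝ → ℂ) (a : ℤ → ℂ) (hf : ∀ t, f t = ∑' ℓ : ℤ, a ℓ * φ (t - ℓ)) :
    ∃ (M : ℕ) (q : ℕ → ℂ), (∃ i ≤ M, q i ≠ 0) ∧
    ∀ t : ℝ, |t| ≤ 1 → ∑ i ∈ Finset.range (M + 1), q i * f ((2⁻¹ : ℝ) ^ i * t) = 0 := by
  have hall : ∀ i : ℕ, ∃ b : ℤ → ℂ, ∀ t : ℝ, f ((2⁻¹ : ℝ) ^ i * t) = ∑' ℓ : ℤ, b ℓ * φ (t - ℓ) := by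
    intro i
    induction i with
    | zero => exact ⟨a, by simpa using hf⟩
    | succ i ih =>
      obtain ⟨b, hb⟩ := ih
      obtain ⟨b', hb'⟩ := aux_half N e φ hsupp href b
      refine ⟨b', fun t => ?_⟩
      rw [← hb', ← hb, pow_succ, mul_assoc]
  choose b hb using hall
  obtain ⟨L, hL⟩ := aux_finite φ hsupp
  set I := Finset.Icc (-((L + 1 : ℕ) : ℤ)) ((L + 1 : ℕ) : ℤ) with hI
  let T : (Fin (I.card + 1) → ℂ) →ₗ[ℂ] (I → ℂ) :=
    { toFun := fun q ℓ => ∑ i, q i * b i ℓ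
      map_add' := by intro x y; ext ℓ; simp [add_mul, Finset.sum_add_distrib]
      map_smul' := by intro r x; ext ℓ; simp [Finset.mul_sum, mul_assoc] }
  have hker : LinearMap.ker T ≠ ⊥ := LinearMap.ker_ne_bot_of_finrank_lt (by simp)
  obtain ⟨q, hq, hq0⟩ := Submodule.exists_mem_ne_zero_of_ne_bot hker
  obtain ⟨i0, hi0⟩ := Function.ne_iff.1 hq0
  refine ⟨I.card, fun i => if h : i < I.card + 1 then q ⟨i, h⟩ else 0, ⟨i0, by omega, ?_⟩, ?_⟩
  · simp only [Fin.is_lt, dite_true, Fin.eta]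
    exact hi0
  · intro t ht
    have hft : ∀ i : ℕ, f ((2⁻¹ : ℝ) ^ i * t) = ∑ ℓ ∈ I, b i ℓ * φ (t - ℓ) := by
      intro i
      rw [hb]
      refine tsum_eq_sum fun ℓ hℓ => ?_
      rw [aux_supp φ L hL t 1 (by simpa using ht) ℓ hℓ, mul_zero]
    rw [Finset.sum_range]
    simp only [Fin.is_lt, dite_true, hft, Finset.mul_sum, Fin.eta]
    rw [Finset.sum_comm]
    refine Finset.sum_eq_zero fun ℓ hℓ => ?_
    have := congrFun (LinearMap.mem_ker.1 hq) ⟨ℓ, hℓ⟩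
    simp only [T, LinearMap.coe_mk, AddHom.coe_mk, Pi.zero_apply] at this
    simp only [← mul_assoc]
    rw [← Finset.sum_mul, this, zero_mul]

/-- stationary case: Let `φ̂(z) = Π_{j=1}^∞ a(2^{−j}z)` for one fixed
trigonometric polynomial `a` of degree ≤ N with `a(0) = 1`, `sup_ℝ|a| ≤ C`, where `φ` is
continuous, integrable, compactly supported with linearly independent integer shifts. If the
analytic function `g(t) = e^{λt} Σ_{k=0}^d p_k(t)·ω_k(t)` (with `d ≤ N`, `ω_k` 1-periodic
analytic, `ω_d ≢ 0`, `deg p_k = k`) belongs to `V_φ`, then `λ ∈ 2πi·ℤ`, each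
`t ↦ e^{λt}·ω_k(t)` is constant, and `g` is an algebraic polynomial of degree `d`. -/
theorem stmt_18 (N : ℕ) (C : ℝ) (hC : 0 < C)
    (coef : ℕ → ℂ) (A : ℂ → ℂ)
    (hA : ∀ y : ℂ, A y =
      ∑ m ∈ Finset.range (N + 1), coef m * Complex.exp (-(2 * (Real.pi : ℂ) * Complex.I * (m : ℂ) * y)))
    (hA0 : A 0 = 1)
    (hAbd : ∀ y : ℝ, ‖A ((y : ℂ))‖ ≤ C)
    (φ : ℝ → ℂ) (hcont : Continuous φ) (hint : Integrable φ) (hsupp : HasCompactSupport φ)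
    (hli : ∀ b : ℤ → ℂ, (∀ t : ℝ, ∑' ℓ : ℤ, b ℓ * φ (t - (ℓ : ℝ)) = 0) → ∀ ℓ, b ℓ = 0)
    (hprod : ∀ z : ℂ, Filter.Tendsto
      (fun J : ℕ => ∏ j ∈ Finset.Icc 1 J, A ((2 : ℂ) ^ (-(j : ℤ)) * z))
      Filter.atTop (nhds (fourierExt φ z)))
    (lam : ℂ) (d : ℕ) (hd : d ≤ N) (ω : ℕ → ℝ → ℂ)
    (hper : ∀ k ≤ d, ∀ t : ℝ, ω k (t + 1) = ω k t)
    (hana : ∀ k ≤ d, ∀ x : ℝ, AnalyticAt ℝ (ω k) x)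
    (hωd : ∃ t : ℝ, ω d t ≠ 0)
    (p : ℕ → Polynomial ℂ) (hdeg : ∀ k ≤ d, (p k).degree = k)
    (a : ℤ → ℂ)
    (hg : ∀ t : ℝ,
      Complex.exp (lam * (t : ℂ)) * ∑ k ∈ Finset.range (d + 1), (p k).eval (t : ℂ) * ω k t
        = ∑' ℓ : ℤ, a ℓ * φ (t - (ℓ : ℝ))) :
    (∃ m : ℤ, lam = 2 * Real.pi * Complex.I * m) ∧
    (∀ k ≤ d, ∃ cst : ℂ, ∀ t : ℝ, Complex.exp (lam * (t : ℂ)) * ω k t = cst) ∧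
    ∃ P : Polynomial ℂ, P.degree = d ∧ ∀ t : ℝ,
      Complex.exp (lam * (t : ℂ)) * ∑ k ∈ Finset.range (d + 1), (p k).eval (t : ℂ) * ω k t
        = P.eval (t : ℂ) := by
  have href := aux_refine N coef A hA φ hcont hint hprod
  obtain ⟨M, q, hq, hrel⟩ := aux_rel N (fun m => 2 * coef m) φ hsupp href
    (fun t : ℝ => Complex.exp (lam * (t : ℂ)) *
      ∑ k ∈ Finset.range (d + 1), (p k).eval (t : ℂ) * ω k t) a hg
  have hgan : ∀ x : ℝ, AnalyticAt ℝ (fun t : ℝ => Complex.exp (lam * (t : ℂ)) *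
      ∑ k ∈ Finset.range (d + 1), (p k).eval (t : ℂ) * ω k t) x := by
    intro x
    have hcast : AnalyticAt ℝ (fun t : ℝ => (t : ℂ)) x := Complex.ofRealCLM.analyticAt x
    refine AnalyticAt.mul ?_ ?_
    · have he : AnalyticAt ℝ Complex.exp (lam * (x : ℂ)) :=
        (analyticAt_cexp (z := lam * (x : ℂ))).restrictScalars
      exact AnalyticAt.fun_comp (f := fun t : ℝ => lam * (t : ℂ)) he (analyticAt_const.mul hcast)
    · refine Finset.analyticAt_fun_sum _ fun k hk => ?_
      refine AnalyticAt.mul ?_ (hana k (by simpa [Nat.lt_succ_iff] using hk) x)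
      simp_rw [Polynomial.eval_eq_sum, Polynomial.sum]
      exact Finset.analyticAt_fun_sum _ fun n _ => analyticAt_const.mul (hcast.pow n)
  obtain ⟨P, hP⟩ := aux_poly _ hgan M q hq hrel
  obtain ⟨h1, h2, h3⟩ := aux_alg lam d ω hper hωd p hdeg P hP
  exact ⟨h1, h2, P, h3, hP⟩
end

section
/- For each j ∈ ℕ let a_j : ℂ → ℂ be a trigonometric polynomial (a finite sum a_j(y) = Σ_m a_{j,m}·e^{−2πi m y}, hence 1-periodic: a_j(y+1) = a_j(y) for all y ∈ ℂ), and let F : ℂ → ℂ satisfy F(z) = Π_{j=1}^∞ a_j(2^{−j} z) for all z ∈ ℂ, where the infinite product is the pointwise limit of the partial products. Let α ∈ ℂ and assume the generalized zero condition a_j(2^{−j}·α + 1/2) = 0 for every j ∈ ℕ. Then F(α + β) = 0 for every β ∈ ℤ ∖ {0} (the generalized Strang–Fix condition). -/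
/-- If `F(z) = Π_{j=1}^∞ a_j(2^{−j}z)` for 1-periodic trigonometric polynomials
`a_j : ℂ → ℂ` and `a_j(2^{−j}·α + 1/2) = 0` for every `j ≥ 1` (generalized zero condition),
then `F(α+β) = 0` for every `β ∈ ℤ ∖ {0}` (generalized Strang–Fix condition). -/
theorem stmt_19 (a : ℕ → ℂ → ℂ)
    (htrig : ∀ j : ℕ, 1 ≤ j → ∃ (S : Finset ℤ) (c : ℤ → ℂ), ∀ y : ℂ,
      a j y = ∑ m ∈ S, c m * Complex.exp (-(2 * (Real.pi : ℂ) * Complex.I * (m : ℂ) * y)))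
    (hper : ∀ j : ℕ, 1 ≤ j → ∀ y : ℂ, a j (y + 1) = a j y)
    (F : ℂ → ℂ)
    (hF : ∀ z : ℂ, Filter.Tendsto
      (fun J : ℕ => ∏ j ∈ Finset.Icc 1 J, a j ((2 : ℂ) ^ (-(j : ℤ)) * z))
      Filter.atTop (nhds (F z)))
    (α : ℂ)
    (hzero : ∀ j : ℕ, 1 ≤ j → a j ((2 : ℂ) ^ (-(j : ℤ)) * α + 1 / 2) = 0) :
    ∀ β : ℤ, β ≠ 0 → F (α + (β : ℂ)) = 0 := by
  intro β hβ
  have hfin : FiniteMultiplicity (2 : ℤ) β :=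
    Int.finiteMultiplicity_iff.2 ⟨by decide, hβ⟩
  obtain ⟨m, hm, hnd⟩ := hfin.exists_eq_pow_mul_and_not_dvd
  generalize multiplicity (2 : ℤ) β = k at hm
  obtain ⟨n, hn⟩ : ∃ n : ℤ, m = 2 * n + 1 := ⟨m / 2, by omega⟩
  have h1 : 1 ≤ k + 1 := by omega
  have hp : Function.Periodic (a (k + 1)) 1 := hper (k + 1) h1
  have harg : (2 : ℂ) ^ (-((k + 1 : ℕ) : ℤ)) * (α + (β : ℂ))
      = ((2 : ℂ) ^ (-((k + 1 : ℕ) : ℤ)) * α + 1 / 2) + (n : ℂ) * 1 := by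
    rw [hm, hn, zpow_neg, zpow_natCast]
    push_cast
    field_simp
    ring
  have hz : a (k + 1) ((2 : ℂ) ^ (-((k + 1 : ℕ) : ℤ)) * (α + (β : ℂ))) = 0 := by
    rw [harg, hp.int_mul n]
    exact hzero (k + 1) h1
  refine tendsto_nhds_unique (hF (α + (β : ℂ))) ?_
  refine tendsto_const_nhds.congr' ?_
  filter_upwards [Filter.eventually_ge_atTop (k + 1)] with J hJ
  exact (Finset.prod_eq_zero (Finset.mem_Icc.2 ⟨h1, hJ⟩) hz).symm
end
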